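/- Let q, q̃ ∈ L¹((0,π);ℝ), and for each λ ∈ ℂ let S(·,λ) and S̃(·,λ) be the solutions of −y″ + q y = λ y and −y″ + q̃ y = λ y on [0,π], respectively, with S(0,λ) = S̃(0,λ) = 0 and S′(0,λ) = S̃′(0,λ) = 1. If {λ ∈ ℂ : S(π,λ) = 0} = {λ ∈ ℂ : S̃(π,λ) = 0} and {λ ∈ ℂ : S′(π,λ) = 0} = {λ ∈ ℂ : S̃′(π,λ) = 0}, then q(x) = q̃(x) for almost every x ∈ (0,π). -/

import Mathlib

open MeasureTheory Set Complex

/-- `y` (with derivative `y'`) is a solution of `-y'' + q y = λ y` on the set `s`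
(containing the basepoint `0`): `y`, `y'` are absolutely continuous on `s` and
`y'' = (q - λ) y` almost everywhere, encoded via integral representations. -/
def SLSol (q : ℝ → ℂ) (lam : ℂ) (y y' : ℝ → ℂ) (s : Set ℝ) : Prop :=
  (∀ x ∈ s, IntervalIntegrable y' volume 0 x) ∧
  (∀ x ∈ s, IntervalIntegrable (fun t => (q t - lam) * y t) volume 0 x) ∧
  (∀ x ∈ s, y x = y 0 + ∫ t in (0:ℝ)..x, y' t) ∧
  (∀ x ∈ s, y' x = y' 0 + ∫ t in (0:ℝ)..x, (q t - lam) * y t)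

open Filter Asymptotics Topology
open scoped ComplexConjugate Interval

/-!
Write `S(x, l)` for the solution with `S(0, l) = 0` and `S'(0, l) = 1`. As `q` is real, the zeros
of the entire functions `S(b, ·)` and `S'(b, ·)` are real and simple: the `l`-derivative of their
Wronskian is `∫ S ^ 2`. Duhamel's formula compares `S(b, k ^ 2)` with `sin (k b) / k` and
`S'(b, k ^ 2)` with `cos (k b)`, up to an error smaller by a factor `‖k‖`. Hence any entire
function that vanishes at the zeros of one of them and is negligible against it on large
rectangles is zero, because its quotient is entire and tends to zero on those rectangles. Applied
to the differences for `q` and `q̃`, this gives `S(b, ·) = S̃(b, ·)` and `S'(b, ·) = S̃'(b, ·)`.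

Let `R`, `R̃` be the analogues of `S`, `S̃` for the reflected potentials. At a zero of `S(b, ·)`
the solution `S(b - x, l)` equals `-S'(b, l) R(x, l)`, and likewise for `q̃`, so the same
principle shows `R̃(x, l) S(b - x, l) = R(x, l) S̃(b - x, l)` for all `l`. Differentiating in `x`
and using the Wronskian identities `S(b - x) R'(x) + S'(b - x) R(x) = S(b)` yields
`S ^ 2 = S̃ ^ 2`. At `l = i` the solution `S` has no zeros in `(0, b]`, so `q` can be recovered
from `S ^ 2`.
-/

section Primitive

variable {E F 𝕜 : Type*} [NormedAddCommGroup E] [NormedSpace ℝ E] [NormedAddCommGroup F]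
  [NormedSpace ℝ F] [NormedField 𝕜] [NormedAlgebra ℝ 𝕜] {a b x y : ℝ}

/-- `u` is absolutely continuous on the interval with endpoints `a` and `b`, with almost everywhere
derivative `u'`, encoded by the integral representation of `u`. -/
def IsPrimitiveOn (u u' : ℝ → E) (a b : ℝ) : Prop :=
  IntervalIntegrable u' volume a b ∧ ∀ x ∈ uIcc a b, u x = u a + ∫ t in a..x, u' t

lemma absolutelyContinuousOnInterval_of_dist_le {X Y : Type*} [PseudoMetricSpace X]
    [PseudoMetricSpace Y] {f : ℝ → X} {g : ℝ → Y} (hg : AbsolutelyContinuousOnInterval g a b)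
    (hfg : ∀ x ∈ uIcc a b, ∀ y ∈ uIcc a b, dist (f x) (f y) ≤ dist (g x) (g y)) :
    AbsolutelyContinuousOnInterval f a b := by
  rw [absolutelyContinuousOnInterval_iff] at hg ⊢
  intro ε hε
  obtain ⟨δ, hδ, hgδ⟩ := hg ε hε
  refine ⟨δ, hδ, fun I hI hIδ => (Finset.sum_le_sum fun i hi => ?_).trans_lt (hgδ I hI hIδ)⟩
  exact hfg _ (hI.1 i hi).1 _ (hI.1 i hi).2

lemma absolutelyContinuousOnInterval_integral {f : ℝ → E} (hf : IntervalIntegrable f volume a b) :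
    AbsolutelyContinuousOnInterval (fun x => ∫ t in a..x, f t) a b := by
  refine absolutelyContinuousOnInterval_of_dist_le
    (hf.norm.absolutelyContinuousOnInterval_intervalIntegral left_mem_uIcc) fun x hx y hy => ?_
  have hfx := hf.mono_set (uIcc_subset_uIcc left_mem_uIcc hx)
  have hfy := hf.mono_set (uIcc_subset_uIcc left_mem_uIcc hy)
  rw [dist_eq_norm, dist_eq_norm, intervalIntegral.integral_interval_sub_left hfx hfy,
    intervalIntegral.integral_interval_sub_left hfx.norm hfy.norm]
  exact intervalIntegral.norm_integral_le_abs_integral_norm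

namespace IsPrimitiveOn

variable {u u' v v' : ℝ → E}

lemma congr (h : IsPrimitiveOn u u' a b) (huv : EqOn u v (uIcc a b))
    (huv' : EqOn u' v' (uIcc a b)) : IsPrimitiveOn v v' a b := by
  refine ⟨h.1.congr fun x hx => huv' (uIoc_subset_uIcc hx), fun x hx => ?_⟩
  rw [← huv hx, ← huv left_mem_uIcc, h.2 x hx]
  exact congrArg _ (intervalIntegral.integral_congr fun t ht =>
    huv' (uIcc_subset_uIcc left_mem_uIcc hx ht))

lemma congr_deriv (h : IsPrimitiveOn u u' a b) (huv' : EqOn u' v' (uIcc a b)) :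
    IsPrimitiveOn u v' a b :=
  h.congr (eqOn_refl _ _) huv'

lemma of_hasDerivAt [CompleteSpace E] (h : ∀ x, HasDerivAt u (u' x) x) (hu' : Continuous u')
    (a b : ℝ) : IsPrimitiveOn u u' a b :=
  ⟨hu'.intervalIntegrable _ _, fun x _ => by
    rw [intervalIntegral.integral_eq_sub_of_hasDerivAt (fun t _ => h t)
      (hu'.intervalIntegrable _ _), add_sub_cancel]⟩

lemma clm_comp [CompleteSpace E] [CompleteSpace F] (h : IsPrimitiveOn u u' a b) (L : E →L[ℝ] F) :
    IsPrimitiveOn (fun x => L (u x)) (fun x => L (u' x)) a b := by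
  refine ⟨⟨L.integrable_comp h.1.1, L.integrable_comp h.1.2⟩, fun x hx => ?_⟩
  beta_reduce
  rw [L.intervalIntegral_comp_comm (h.1.mono_set (uIcc_subset_uIcc left_mem_uIcc hx)),
    h.2 x hx, map_add]

lemma sub (hu : IsPrimitiveOn u u' a b) (hv : IsPrimitiveOn v v' a b) :
    IsPrimitiveOn (fun x => u x - v x) (fun x => u' x - v' x) a b := by
  refine ⟨hu.1.sub hv.1, fun x hx => ?_⟩
  have hax := uIcc_subset_uIcc left_mem_uIcc hx
  beta_reduce
  rw [intervalIntegral.integral_sub (hu.1.mono_set hax) (hv.1.mono_set hax), hu.2 x hx, hv.2 x hx,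
    add_sub_add_comm]

lemma integral_eq_sub (h : IsPrimitiveOn u u' a b) (hx : x ∈ uIcc a b) (hy : y ∈ uIcc a b) :
    ∫ t in x..y, u' t = u y - u x := by
  rw [h.2 x hx, h.2 y hy, add_sub_add_left_eq_sub, intervalIntegral.integral_interval_sub_left
    (h.1.mono_set (uIcc_subset_uIcc left_mem_uIcc hy))
    (h.1.mono_set (uIcc_subset_uIcc left_mem_uIcc hx))]

lemma mono (h : IsPrimitiveOn u u' a b) (hx : x ∈ uIcc a b) : IsPrimitiveOn u u' a x :=
  ⟨h.1.mono_set (uIcc_subset_uIcc left_mem_uIcc hx),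
    fun y hy => h.2 y (uIcc_subset_uIcc left_mem_uIcc hx hy)⟩

lemma continuousOn (h : IsPrimitiveOn u u' a b) : ContinuousOn u (uIcc a b) :=
  (continuousOn_const.add
    (intervalIntegral.continuousOn_primitive_interval' h.1 left_mem_uIcc)).congr h.2

lemma absolutelyContinuousOnInterval (h : IsPrimitiveOn u u' a b) :
    AbsolutelyContinuousOnInterval u a b :=
  absolutelyContinuousOnInterval_of_dist_le (absolutelyContinuousOnInterval_integral h.1)
    fun x hx y hy => by rw [h.2 x hx, h.2 y hy, dist_add_left]

lemma hasDerivAt_of_integral {e : E} (h : IsPrimitiveOn u u' a b) (hx : x ∈ uIoo a b)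
    (hint : HasDerivAt (fun y => ∫ t in a..y, u' t) e x) : HasDerivAt u e x := by
  refine (hint.const_add (u a)).congr_of_eventuallyEq ?_
  filter_upwards [isOpen_Ioo.mem_nhds hx] with t ht using h.2 t (uIoo_subset_uIcc_self ht)

lemma hasDerivAt [CompleteSpace E] (h : IsPrimitiveOn u u' a b) (hu' : ContinuousOn u' (uIcc a b))
    (hx : x ∈ uIoo a b) : HasDerivAt u (u' x) x := by
  have hn : uIcc a b ∈ 𝓝 x := mem_of_superset (isOpen_Ioo.mem_nhds hx) uIoo_subset_uIcc_self
  refine h.hasDerivAt_of_integral hx (intervalIntegral.integral_hasDerivAt_right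
    (h.mono (uIoo_subset_uIcc_self hx)).1 ?_ (hu'.continuousAt hn))
  simpa only [nhdsWithin_eq_nhds.2 hn]
    using hu'.stronglyMeasurableAtFilter_nhdsWithin measurableSet_uIcc x

lemma ae_hasDerivAt [CompleteSpace E] (h : IsPrimitiveOn u u' a b) :
    ∀ᵐ x : ℝ, x ∈ uIoo a b → HasDerivAt u (u' x) x := by
  filter_upwards [h.1.ae_hasDerivAt_integral] with x hint hx
  exact h.hasDerivAt_of_integral hx (hint (uIoo_subset_uIcc_self hx) a left_mem_uIcc)

lemma of_ae_hasDerivAt [CompleteSpace E] (hu : AbsolutelyContinuousOnInterval u a b)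
    (hu' : IntervalIntegrable u' volume a b)
    (h : ∀ᵐ x : ℝ, x ∈ uIoo a b → HasDerivAt u (u' x) x) : IsPrimitiveOn u u' a b := by
  have hderiv : ∀ᵐ x : ℝ, x ∈ uIcc a b → HasDerivAt (u - fun y => ∫ t in a..y, u' t) 0 x := by
    have hmem : (uIoo a b : Set ℝ) =ᵐ[volume] uIcc a b := Ioo_ae_eq_Icc
    filter_upwards [h, hu'.ae_hasDerivAt_integral, hmem.mem_iff] with x hux hint hx hxab
    simpa only [sub_self] using (hux (hx.2 hxab)).sub (hint hxab a left_mem_uIcc)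
  obtain ⟨C, hC⟩ :=
    (hu.sub (absolutelyContinuousOnInterval_integral hu')).const_of_ae_hasDerivAt_zero hderiv
  refine ⟨hu', fun x hx => ?_⟩
  have hCa : u a = C := by simpa using hC a left_mem_uIcc
  rw [hCa, ← sub_eq_iff_eq_add]
  exact hC x hx

lemma mul [CompleteSpace 𝕜] {u u' v v' : ℝ → 𝕜} (hu : IsPrimitiveOn u u' a b)
    (hv : IsPrimitiveOn v v' a b) :
    IsPrimitiveOn (fun x => u x * v x) (fun x => u' x * v x + u x * v' x) a b := by
  refine of_ae_hasDerivAt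
    (hu.absolutelyContinuousOnInterval.smul hv.absolutelyContinuousOnInterval)
    ((hu.1.mul_continuousOn hv.continuousOn).add (hv.1.continuousOn_mul hu.continuousOn)) ?_
  filter_upwards [hu.ae_hasDerivAt, hv.ae_hasDerivAt] with x hux hvx hx
  exact (hux hx).mul (hvx hx)

lemma comp_sub_left (h : IsPrimitiveOn u u' a b) :
    IsPrimitiveOn (fun x => u (a + b - x)) (fun x => -u' (a + b - x)) a b := by
  have hint := (h.1.comp_sub_left (a + b)).symm
  rw [add_sub_cancel_left, add_sub_cancel_right] at hint
  refine ⟨hint.neg, fun x hx => ?_⟩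
  have hx' : a + b - x ∈ uIcc a b := by
    rw [mem_uIcc] at hx ⊢
    exact hx.imp (fun hx => ⟨by linarith, by linarith⟩) (fun hx => ⟨by linarith, by linarith⟩)
  beta_reduce
  rw [intervalIntegral.integral_neg, intervalIntegral.integral_comp_sub_left,
    add_sub_cancel_left, h.integral_eq_sub hx' right_mem_uIcc, neg_sub, add_sub_cancel]

end IsPrimitiveOn

end Primitive

lemma slSol_Icc_iff {q : ℝ → ℂ} {lam : ℂ} {y y' : ℝ → ℂ} {b : ℝ} (hb : 0 ≤ b) :
    SLSol q lam y y' (Icc 0 b) ↔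
      IsPrimitiveOn y y' 0 b ∧ IsPrimitiveOn y' (fun t => (q t - lam) * y t) 0 b := by
  rw [IsPrimitiveOn, IsPrimitiveOn, uIcc_of_le hb]
  refine ⟨fun h => ⟨⟨h.1 b (right_mem_Icc.2 hb), h.2.2.1⟩, h.2.1 b (right_mem_Icc.2 hb), h.2.2.2⟩,
    fun h => ⟨fun x hx => h.1.1.mono_set ?_, fun x hx => h.2.1.mono_set ?_, h.1.2, h.2.2⟩⟩
  all_goals exact uIcc_subset_uIcc left_mem_uIcc (Icc_subset_uIcc hx)

namespace SLSol

variable {q qt : ℝ → ℂ} {l m : ℂ} {y y' z z' : ℝ → ℂ} {b x : ℝ}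

lemma isPrimitiveOn (h : SLSol q l y y' (Icc 0 b)) (hb : 0 ≤ b) : IsPrimitiveOn y y' 0 b :=
  ((slSol_Icc_iff hb).1 h).1

lemma isPrimitiveOn_deriv (h : SLSol q l y y' (Icc 0 b)) (hb : 0 ≤ b) :
    IsPrimitiveOn y' (fun t => (q t - l) * y t) 0 b :=
  ((slSol_Icc_iff hb).1 h).2

lemma continuousOn (h : SLSol q l y y' (Icc 0 b)) (hb : 0 ≤ b) : ContinuousOn y (Icc 0 b) := by
  simpa only [uIcc_of_le hb] using (h.isPrimitiveOn hb).continuousOn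

lemma hasDerivAt (h : SLSol q l y y' (Icc 0 b)) (hb : 0 ≤ b) (hx : x ∈ Ioo 0 b) :
    HasDerivAt y (y' x) x :=
  (h.isPrimitiveOn hb).hasDerivAt (h.isPrimitiveOn_deriv hb).continuousOn (Ioo_subset_uIoo hx)

lemma mono_set {s t : Set ℝ} (h : SLSol q l y y' s) (hts : t ⊆ s) : SLSol q l y y' t :=
  ⟨fun x hx => h.1 x (hts hx), fun x hx => h.2.1 x (hts hx), fun x hx => h.2.2.1 x (hts hx),
    fun x hx => h.2.2.2 x (hts hx)⟩

lemma sub (hy : SLSol q l y y' (Icc 0 b)) (hz : SLSol q l z z' (Icc 0 b)) (hb : 0 ≤ b) :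
    SLSol q l (fun x => y x - z x) (fun x => y' x - z' x) (Icc 0 b) :=
  (slSol_Icc_iff hb).2 ⟨(hy.isPrimitiveOn hb).sub (hz.isPrimitiveOn hb),
    ((hy.isPrimitiveOn_deriv hb).sub (hz.isPrimitiveOn_deriv hb)).congr_deriv
      fun _ _ => (mul_sub _ _ _).symm⟩

lemma const_mul (h : SLSol q l y y' (Icc 0 b)) (hb : 0 ≤ b) (c : ℂ) :
    SLSol q l (fun x => c * y x) (fun x => c * y' x) (Icc 0 b) := by
  let L := (ContinuousLinearMap.mul ℝ ℂ c)
  exact (slSol_Icc_iff hb).2 ⟨(h.isPrimitiveOn hb).clm_comp L,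
    ((h.isPrimitiveOn_deriv hb).clm_comp L).congr_deriv fun _ _ => mul_left_comm _ _ _⟩

lemma conj_comp {q : ℝ → ℝ} (h : SLSol (fun t => (q t : ℂ)) l y y' (Icc 0 b)) (hb : 0 ≤ b) :
    SLSol (fun t => (q t : ℂ)) (conj l) (fun x => conj (y x)) (fun x => conj (y' x)) (Icc 0 b) := by
  let L := conjCLE.toContinuousLinearMap
  exact (slSol_Icc_iff hb).2 ⟨(h.isPrimitiveOn hb).clm_comp L,
    ((h.isPrimitiveOn_deriv hb).clm_comp L).congr_deriv fun x _ => by simp [L]⟩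

lemma comp_sub_left (h : SLSol q l y y' (Icc 0 b)) (hb : 0 ≤ b) :
    SLSol (fun t => q (b - t)) l (fun x => y (b - x)) (fun x => -y' (b - x)) (Icc 0 b) := by
  have hy := (h.isPrimitiveOn hb).comp_sub_left
  have hy' := (h.isPrimitiveOn_deriv hb).comp_sub_left.clm_comp (-ContinuousLinearMap.id ℝ ℂ)
  simp only [zero_add, _root_.neg_apply, ContinuousLinearMap.id_apply, neg_neg] at hy hy'
  exact (slSol_Icc_iff hb).2 ⟨hy, hy'⟩

lemma isPrimitiveOn_wronskian (hy : SLSol q l y y' (Icc 0 b)) (hz : SLSol qt m z z' (Icc 0 b))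
    (hb : 0 ≤ b) :
    IsPrimitiveOn (fun x => y x * z' x - y' x * z x)
      (fun x => ((qt x - m) - (q x - l)) * (y x * z x)) 0 b :=
  (((hy.isPrimitiveOn hb).mul (hz.isPrimitiveOn_deriv hb)).sub
    ((hy.isPrimitiveOn_deriv hb).mul (hz.isPrimitiveOn hb))).congr_deriv fun x _ => by ring

lemma wronskian_eq (hy : SLSol q l y y' (Icc 0 b)) (hz : SLSol qt m z z' (Icc 0 b))
    (hb : 0 ≤ b) (hx : x ∈ Icc 0 b) :
    y x * z' x - y' x * z x = y 0 * z' 0 - y' 0 * z 0 +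
      ∫ t in (0 : ℝ)..x, ((qt t - m) - (q t - l)) * (y t * z t) :=
  (hy.isPrimitiveOn_wronskian hz hb).2 x (Icc_subset_uIcc hx)

lemma eventually_eq_of_sq_eq (hb : 0 ≤ b) (hy : SLSol q l y y' (Icc 0 b))
    (hz : SLSol qt l z z' (Icc 0 b)) (hsq : ∀ x ∈ Ioo 0 b, y x ^ 2 = z x ^ 2)
    (hne : ∀ x ∈ Ioo 0 b, y x ≠ 0) : ∀ᵐ x : ℝ, x ∈ Ioo 0 b → q x = qt x := by
  have hmul : ∀ x ∈ Ioo 0 b, y x * y' x = z x * z' x := by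
    intro x hx
    have hderiv := ((hy.hasDerivAt hb hx).pow 2).unique <| ((hz.hasDerivAt hb hx).pow 2)
      |>.congr_of_eventuallyEq (eventuallyEq_of_mem (isOpen_Ioo.mem_nhds hx) hsq)
    linear_combination hderiv / 2
  filter_upwards [(hy.isPrimitiveOn_deriv hb).ae_hasDerivAt,
    (hz.isPrimitiveOn_deriv hb).ae_hasDerivAt] with x hy' hz' hx
  have hx' := Ioo_subset_uIoo hx
  have hderiv := ((hy.hasDerivAt hb hx).mul (hy' hx')).unique <|
    ((hz.hasDerivAt hb hx).mul (hz' hx'))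
      |>.congr_of_eventuallyEq (eventuallyEq_of_mem (isOpen_Ioo.mem_nhds hx) hmul)
  have hy2 : y x ^ 2 ≠ 0 := pow_ne_zero 2 (hne x hx)
  have hderiv_sq : y' x ^ 2 = z' x ^ 2 := by
    apply mul_left_cancel₀ hy2
    linear_combination (y x * y' x + z x * z' x) * hmul x hx - z' x ^ 2 * hsq x hx
  apply mul_left_cancel₀ hy2
  linear_combination hderiv - hderiv_sq + (l - qt x) * hsq x hx

end SLSol

/-- `y` is the solution of `-y'' + q y = lam y` on `[0, b]` with `y 0 = 0` and `y' 0 = 1`: the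
analogue of `sin (√lam x) / √lam`, which it is for `q = 0`. -/
structure IsSineSol (q : ℝ → ℂ) (b : ℝ) (lam : ℂ) (y y' : ℝ → ℂ) : Prop where
  slSol : SLSol q lam y y' (Icc 0 b)
  apply_zero : y 0 = 0
  deriv_zero : y' 0 = 1

section Volterra

variable {b : ℝ} {g : ℝ → ℂ}

lemma intervalIntegrable_mul_IccExtend (hb : 0 ≤ b) (hg : IntervalIntegrable g volume 0 b)
    (z : C(Icc 0 b, ℂ)) (x : Icc 0 b) :
    IntervalIntegrable (fun t => g t * IccExtend hb z t) volume 0 x :=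
  (hg.mul_continuousOn z.continuous.Icc_extend'.continuousOn).mono_set
    (uIcc_subset_uIcc left_mem_uIcc (Icc_subset_uIcc x.2))

lemma norm_integral_mul_IccExtend_le (hb : 0 ≤ b) (hg : IntervalIntegrable g volume 0 b)
    (z : C(Icc 0 b, ℂ)) (x : Icc 0 b) :
    ‖∫ t in (0 : ℝ)..x, g t * IccExtend hb z t‖ ≤ (∫ t in (0 : ℝ)..x, ‖g t‖) * ‖z‖ := by
  rw [← intervalIntegral.integral_mul_const]
  refine intervalIntegral.norm_integral_le_of_norm_le x.2.1 (Eventually.of_forall fun t _ => ?_)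
    ((hg.mono_set (uIcc_subset_uIcc left_mem_uIcc (Icc_subset_uIcc x.2))).norm.mul_const _)
  rw [norm_mul]
  gcongr
  exact z.norm_coe_le_norm _

lemma integral_norm_mono (hg : IntervalIntegrable g volume 0 b) (x : Icc 0 b) :
    ∫ t in (0 : ℝ)..x, ‖g t‖ ≤ ∫ t in (0 : ℝ)..b, ‖g t‖ :=
  intervalIntegral.integral_mono_interval le_rfl x.2.1 x.2.2
    (Eventually.of_forall fun _ => norm_nonneg _) hg.norm

/-- The operator `z ↦ (x ↦ ∫ t in 0..x, g t * z t)` on `C([0, b])`, for integrable `g`. -/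
noncomputable def integralOp (hb : 0 ≤ b) (g : ℝ → ℂ) (hg : IntervalIntegrable g volume 0 b) :
    C(Icc 0 b, ℂ) →L[ℂ] C(Icc 0 b, ℂ) :=
  LinearMap.mkContinuous
    { toFun := fun z => ⟨fun x => ∫ t in (0 : ℝ)..x, g t * IccExtend hb z t, by
        have hcont := intervalIntegral.continuousOn_primitive_interval'
          (intervalIntegrable_mul_IccExtend hb hg z ⟨b, right_mem_Icc.2 hb⟩) left_mem_uIcc
        rw [uIcc_of_le hb] at hcont
        exact hcont.domRestrict⟩
      map_add' := fun z w => by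
        ext x
        change ∫ t in (0 : ℝ)..x, g t * (IccExtend hb z t + IccExtend hb w t) = _
        simp only [mul_add]
        exact intervalIntegral.integral_add (intervalIntegrable_mul_IccExtend hb hg z x)
          (intervalIntegrable_mul_IccExtend hb hg w x)
      map_smul' := fun c z => by
        ext x
        change ∫ t in (0 : ℝ)..x, g t * (c * IccExtend hb z t) = _
        simp only [mul_left_comm (g _)]
        exact intervalIntegral.integral_const_mul c _ }
    (∫ t in (0 : ℝ)..b, ‖g t‖) fun z =>
      (ContinuousMap.norm_le _ (by
        have := intervalIntegral.integral_nonneg (μ := volume) hb fun t _ => norm_nonneg (g t)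
        positivity)).2 fun x =>
        (norm_integral_mul_IccExtend_le hb hg z x).trans <| by
          gcongr
          exact integral_norm_mono hg x

lemma integralOp_apply (hb : 0 ≤ b) (hg : IntervalIntegrable g volume 0 b) (z : C(Icc 0 b, ℂ))
    (x : Icc 0 b) : integralOp hb g hg z x = ∫ t in (0 : ℝ)..x, g t * IccExtend hb z t :=
  rfl

lemma integralOp_sub_const (hb : 0 ≤ b) (hg : IntervalIntegrable g volume 0 b) (c : ℂ) :
    integralOp hb (fun t => g t - c) (hg.sub intervalIntegrable_const) =
      integralOp hb g hg - c • integralOp hb (fun _ => 1) intervalIntegrable_const := by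
  ext z x
  simp only [integralOp_apply, _root_.sub_apply, ContinuousMap.sub_apply,
    _root_.smul_apply, ContinuousMap.smul_apply, one_mul, sub_mul, smul_eq_mul]
  rw [intervalIntegral.integral_sub (intervalIntegrable_mul_IccExtend hb hg z x)
    (intervalIntegrable_mul_IccExtend hb intervalIntegrable_const z x),
    intervalIntegral.integral_const_mul]

/-- Multiplication by `x ↦ exp (κ x)` on `C([0, b])`. -/
noncomputable def expMul (b κ : ℝ) : C(Icc 0 b, ℂ) →L[ℂ] C(Icc 0 b, ℂ) :=
  ContinuousLinearMap.mul ℂ _ ⟨fun x => exp (κ * x), by fun_prop⟩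

lemma expMul_apply (κ : ℝ) (z : C(Icc 0 b, ℂ)) (x : Icc 0 b) :
    expMul b κ z x = exp (κ * x) * z x :=
  rfl

lemma expMul_mul_expMul_neg (κ : ℝ) : expMul b κ * expMul b (-κ) = 1 := by
  ext z x
  rw [mul_apply_eq_comp, expMul_apply, expMul_apply, ← mul_assoc, ← Complex.exp_add,
    one_apply_eq_self]
  simp

lemma norm_expMul_integralOp_expMul_le (hb : 0 ≤ b) (hg : IntervalIntegrable g volume 0 b)
    {κ C : ℝ} (hgC : ∀ x ∈ Icc 0 b, ∫ t in (0 : ℝ)..x, ‖exp (κ * (t - x)) * g t‖ ≤ C) :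
    ‖expMul b (-κ) * integralOp hb g hg * expMul b κ‖ ≤ C := by
  have hC : 0 ≤ C := by
    simpa only [intervalIntegral.integral_same] using hgC 0 (left_mem_Icc.2 hb)
  refine ContinuousLinearMap.opNorm_le_bound _ hC fun z =>
    (ContinuousMap.norm_le _ (by positivity)).2 fun x => ?_
  have hweight : IntervalIntegrable (fun t => exp (κ * (t - (x : ℝ))) * g t) volume 0 b :=
    hg.continuousOn_mul (by fun_prop)
  have hconj : (expMul b (-κ) * integralOp hb g hg * expMul b κ) z x =
      ∫ t in (0 : ℝ)..x, (exp (κ * (t - (x : ℝ))) * g t) * IccExtend hb z t := by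
    change expMul b (-κ) (integralOp hb g hg (expMul b κ z)) x = _
    rw [expMul_apply, integralOp_apply, ← intervalIntegral.integral_const_mul]
    refine intervalIntegral.integral_congr fun t ht => ?_
    have ht' : t ∈ Icc 0 b := uIcc_subset_Icc (left_mem_Icc.2 hb) x.2 ht
    have hexp : exp (κ * (t - (x : ℝ))) = exp ((-κ : ℝ) * (x : ℝ)) * exp (κ * t) := by
      rw [← Complex.exp_add]
      push_cast
      ring_nf
    rw [IccExtend_of_mem _ _ ht', IccExtend_of_mem _ _ ht', expMul_apply, hexp]
    ring
  rw [hconj]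
  exact (norm_integral_mul_IccExtend_le hb hweight z x).trans
    (mul_le_mul_of_nonneg_right (hgC x x.2) (norm_nonneg z))

lemma norm_exp_mul_sub (κ t x : ℝ) : ‖exp (κ * (t - x))‖ = Real.exp (κ * (t - x)) := by
  rw [Complex.norm_exp]
  norm_cast

lemma integral_norm_exp_mul_le (hg : IntervalIntegrable g volume 0 b) {κ x : ℝ} (hκ : 0 ≤ κ)
    (hx : x ∈ Icc 0 b) :
    ∫ t in (0 : ℝ)..x, ‖exp (κ * (t - x)) * g t‖ ≤ ∫ t in (0 : ℝ)..b, ‖g t‖ := by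
  have hgx := hg.mono_set (uIcc_subset_uIcc left_mem_uIcc (Icc_subset_uIcc hx))
  refine (intervalIntegral.integral_mono_on hx.1 (hgx.continuousOn_mul (by fun_prop)).norm
    hgx.norm fun t ht => ?_).trans (integral_norm_mono hg ⟨x, hx⟩)
  rw [norm_mul, norm_exp_mul_sub]
  refine mul_le_of_le_one_left (norm_nonneg _) (Real.exp_le_one_iff.2 ?_)
  exact mul_nonpos_of_nonneg_of_nonpos hκ (by linarith [ht.2])

lemma integral_norm_exp_le {κ : ℝ} (hκ : 0 < κ) (x : ℝ) :
    ∫ t in (0 : ℝ)..x, ‖exp (κ * (t - x)) * 1‖ ≤ κ⁻¹ := by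
  have hderiv : ∀ t ∈ uIcc 0 x, HasDerivAt (fun t => κ⁻¹ * Real.exp (κ * (t - x)))
      (Real.exp (κ * (t - x))) t := by
    intro t _
    convert! (((hasDerivAt_id t).sub_const x).const_mul κ).exp.const_mul κ⁻¹ using 1
    simp [field]
  simp only [mul_one, norm_exp_mul_sub]
  rw [intervalIntegral.integral_eq_sub_of_hasDerivAt hderiv
    ((by fun_prop : Continuous _).intervalIntegrable _ _)]
  have : 0 ≤ κ⁻¹ * Real.exp (κ * (0 - x)) := by positivity
  simpa using this

lemma isUnit_one_sub_mul_of_norm_conj_lt {R : Type*} [NormedRing R] [HasSummableGeomSeries R]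
    {w w' : R} (h : w * w' = 1) (h' : w' * w = 1) {u v : R}
    (huv : ‖w' * u * w‖ * ‖w' * v * w‖ < 1) : IsUnit (1 - u * v) := by
  have hconj : 1 - u * v = w * (1 - (w' * u * w) * (w' * v * w)) * w' :=
    calc 1 - u * v = w * w' - (w * w') * u * (w * w') * v * (w * w') := by
          simp only [h, one_mul, mul_one]
      _ = w * (1 - (w' * u * w) * (w' * v * w)) * w' := by
          simp only [mul_sub, sub_mul, mul_one, mul_assoc]
  rw [hconj]
  exact (IsUnit.mul ⟨⟨w, w', h, h'⟩, rfl⟩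
    (isUnit_one_sub_of_norm_lt_one ((norm_mul_le _ _).trans_lt huv))).mul ⟨⟨w', w, h', h⟩, rfl⟩

lemma isUnit_one_sub_integralOp_mul_integralOp (hb : 0 ≤ b)
    (hg : IntervalIntegrable g volume 0 b) :
    IsUnit (1 - integralOp hb (fun _ => 1) intervalIntegrable_const * integralOp hb g hg) := by
  set J := integralOp hb (fun _ => 1) intervalIntegrable_const
  set Jg := integralOp hb g hg
  set M := ∫ t in (0 : ℝ)..b, ‖g t‖
  have hM : 0 ≤ M := intervalIntegral.integral_nonneg hb fun t _ => norm_nonneg _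
  obtain ⟨κ, hκ, hMκ⟩ : ∃ κ, 0 < κ ∧ M < κ := ⟨M + 1, by positivity, lt_add_one M⟩
  set W := expMul b κ
  set W' := expMul b (-κ)
  have hJ : ‖W' * J * W‖ ≤ κ⁻¹ :=
    norm_expMul_integralOp_expMul_le hb _ fun x _ => integral_norm_exp_le hκ x
  have hJg : ‖W' * Jg * W‖ ≤ M :=
    norm_expMul_integralOp_expMul_le hb _ fun x hx => integral_norm_exp_mul_le hg hκ.le hx
  have hWW : W' * W = 1 := by simpa only [neg_neg] using expMul_mul_expMul_neg (b := b) (-κ)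
  exact isUnit_one_sub_mul_of_norm_conj_lt (R := C(Icc 0 b, ℂ) →L[ℂ] C(Icc 0 b, ℂ))
    (expMul_mul_expMul_neg κ) hWW <| calc ‖W' * J * W‖ * ‖W' * Jg * W‖ ≤ κ⁻¹ * M := by gcongr
      _ < 1 := by rwa [inv_mul_lt_one₀ hκ]

end Volterra

section CauchyProblem

variable {q : ℝ → ℂ} {l : ℂ} {y y' z z' : ℝ → ℂ} {S S' : ℂ → ℝ → ℂ} {b x : ℝ}

/-- The Volterra operator `V` for which `-y'' + q y = l y` on `[0, b]` reads
`(1 - V) y = y 0 + y' 0 * x`. -/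
noncomputable def volterraOp (hb : 0 ≤ b) (hq : IntervalIntegrable q volume 0 b) (l : ℂ) :
    C(Icc 0 b, ℂ) →L[ℂ] C(Icc 0 b, ℂ) :=
  integralOp hb (fun _ => 1) intervalIntegrable_const *
    integralOp hb (fun t => q t - l) (hq.sub intervalIntegrable_const)

lemma isUnit_one_sub_volterraOp (hb : 0 ≤ b) (hq : IntervalIntegrable q volume 0 b) (l : ℂ) :
    IsUnit (1 - volterraOp hb hq l) :=
  isUnit_one_sub_integralOp_mul_integralOp hb _

lemma differentiable_sub_smul {𝕜 E : Type*} [NontriviallyNormedField 𝕜] [NormedAddCommGroup E]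
    [NormedSpace 𝕜 E] (u v : E) : Differentiable 𝕜 fun l : 𝕜 => u - l • v := by
  fun_prop

lemma differentiable_volterraOp (hb : 0 ≤ b) (hq : IntervalIntegrable q volume 0 b) :
    Differentiable ℂ (volterraOp hb hq) := by
  let J := integralOp hb (fun _ => 1) intervalIntegrable_const
  have hlin : ∀ l, volterraOp hb hq l = J * integralOp hb q hq - l • (J * J) := fun l => by
    rw [volterraOp, integralOp_sub_const hb hq]
    exact (ContinuousLinearMap.comp_sub _ _ _).trans
      (congrArg _ (ContinuousLinearMap.comp_smul _ _ _))
  rw [funext hlin]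
  exact differentiable_sub_smul (𝕜 := ℂ) (E := C(Icc 0 b, ℂ) →L[ℂ] C(Icc 0 b, ℂ)) _ _

lemma differentiable_of_isUnit_of_apply_eq {𝕜 E : Type*} [NontriviallyNormedField 𝕜]
    [NormedAddCommGroup E] [NormedSpace 𝕜 E] [CompleteSpace E] {A : 𝕜 → E →L[𝕜] E}
    (hA : Differentiable 𝕜 A) (hunit : ∀ l, IsUnit (A l)) {z : 𝕜 → E} {f : E}
    (hz : ∀ l, A l (z l) = f) : Differentiable 𝕜 z := by
  have hinv : ∀ l, z l = Ring.inverse (A l) f := fun l => by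
    rw [← hz l, ← mul_apply_eq_comp, Ring.inverse_mul_cancel _ (hunit l), one_apply_eq_self]
  rw [funext hinv]
  exact fun l => ((differentiableAt_inverse (𝕜 := 𝕜) (hunit l)).comp l (hA l)).clm_apply
    (differentiableAt_const f)

/-- The restriction of a solution to `[0, b]`, as an element of `C([0, b])`. -/
def SLSol.toContinuousMap (h : SLSol q l y y' (Icc 0 b)) (hb : 0 ≤ b) : C(Icc 0 b, ℂ) :=
  ⟨(Icc 0 b).domRestrict y, (h.continuousOn hb).domRestrict⟩

lemma SLSol.IccExtend_toContinuousMap (h : SLSol q l y y' (Icc 0 b)) (hb : 0 ≤ b)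
    (hx : x ∈ Icc 0 b) : IccExtend hb (h.toContinuousMap hb) x = y x :=
  IccExtend_of_mem _ _ hx

lemma SLSol.integralOp_toContinuousMap {g : ℝ → ℂ} (h : SLSol q l y y' (Icc 0 b)) (hb : 0 ≤ b)
    (hg : IntervalIntegrable g volume 0 b) (x : Icc 0 b) :
    integralOp hb g hg (h.toContinuousMap hb) x = ∫ t in (0 : ℝ)..x, g t * y t := by
  refine intervalIntegral.integral_congr fun t ht => ?_
  have ht' : t ∈ Icc 0 b := uIcc_subset_Icc (left_mem_Icc.2 hb) x.2 ht
  rw [h.IccExtend_toContinuousMap hb ht']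

lemma SLSol.deriv_eq_add_integralOp (h : SLSol q l y y' (Icc 0 b)) (hb : 0 ≤ b)
    (hq : IntervalIntegrable q volume 0 b) (x : Icc 0 b) :
    y' x = y' 0 + integralOp hb (fun t => q t - l) (hq.sub intervalIntegrable_const)
      (h.toContinuousMap hb) x := by
  rw [h.integralOp_toContinuousMap hb, h.2.2.2 x x.2]

lemma SLSol.one_sub_volterraOp_apply (h : SLSol q l y y' (Icc 0 b)) (hb : 0 ≤ b)
    (hq : IntervalIntegrable q volume 0 b) (x : Icc 0 b) :
    (1 - volterraOp hb hq l) (h.toContinuousMap hb) x = y 0 + y' 0 * x := by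
  have hint : volterraOp hb hq l (h.toContinuousMap hb) x = ∫ t in (0 : ℝ)..x, (y' t - y' 0) := by
    refine intervalIntegral.integral_congr fun t ht => ?_
    have ht' : t ∈ Icc 0 b := uIcc_subset_Icc (left_mem_Icc.2 hb) x.2 ht
    beta_reduce
    rw [one_mul, IccExtend_of_mem _ _ ht', h.deriv_eq_add_integralOp hb hq ⟨t, ht'⟩,
      add_sub_cancel_left]
    rfl
  have hy : (h.toContinuousMap hb) x = y 0 + ∫ t in (0 : ℝ)..x, y' t := h.2.2.1 x x.2
  rw [_root_.sub_apply, ContinuousMap.sub_apply, one_apply_eq_self, hint, hy,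
    intervalIntegral.integral_sub (h.1 x x.2) intervalIntegrable_const,
    intervalIntegral.integral_const, sub_zero, real_smul]
  ring

lemma SLSol.eq_zero (h : SLSol q l y y' (Icc 0 b)) (hb : 0 ≤ b)
    (hq : IntervalIntegrable q volume 0 b) (h0 : y 0 = 0) (h0' : y' 0 = 0) (hx : x ∈ Icc 0 b) :
    y x = 0 ∧ y' x = 0 := by
  have hzero : h.toContinuousMap hb = 0 := by
    refine (ContinuousLinearMap.isUnit_iff_bijective.1
      (isUnit_one_sub_volterraOp hb hq l)).injective ?_
    ext x
    rw [h.one_sub_volterraOp_apply hb hq, map_zero, h0, h0', zero_mul, add_zero,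
      ContinuousMap.zero_apply]
  refine ⟨congrArg (· ⟨x, hx⟩) hzero, ?_⟩
  rw [h.deriv_eq_add_integralOp hb hq ⟨x, hx⟩, hzero, map_zero, h0', zero_add,
    ContinuousMap.zero_apply]

lemma SLSol.eq_of_eq_zero (hy : SLSol q l y y' (Icc 0 b)) (hz : SLSol q l z z' (Icc 0 b))
    (hb : 0 ≤ b) (hq : IntervalIntegrable q volume 0 b) (h0 : y 0 = z 0) (h0' : y' 0 = z' 0)
    (hx : x ∈ Icc 0 b) : y x = z x ∧ y' x = z' x := by
  simpa only [sub_eq_zero] using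
    (hy.sub hz hb).eq_zero hb hq (sub_eq_zero.2 h0) (sub_eq_zero.2 h0') hx

lemma exists_isSineSol (hb : 0 ≤ b) (hq : IntervalIntegrable q volume 0 b) (l : ℂ) :
    ∃ y y' : ℝ → ℂ, IsSineSol q b l y y' := by
  obtain ⟨Y, hY⟩ := (ContinuousLinearMap.isUnit_iff_bijective.1
    (isUnit_one_sub_volterraOp hb hq l)).surjective ⟨fun x => (x : ℂ), by fun_prop⟩
  set J' := integralOp hb (fun t => q t - l) (hq.sub intervalIntegrable_const) Y with hJ'
  have hYx : ∀ x : Icc 0 b, Y x = x + ∫ t in (0 : ℝ)..x, IccExtend hb J' t := by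
    intro x
    have hx := congrArg (· x) hY
    simp only [_root_.sub_apply, one_apply_eq_self, ContinuousMap.sub_apply, volterraOp,
      mul_apply_eq_comp, integralOp_apply _ intervalIntegrable_const, one_mul,
      ContinuousMap.coe_mk] at hx
    exact sub_eq_iff_eq_add.1 hx
  have hY0 : IccExtend hb Y 0 = 0 := by
    rw [IccExtend_of_mem _ _ (left_mem_Icc.2 hb), hYx]
    simp
  have hJ'0 : IccExtend hb J' 0 = 0 := by
    rw [IccExtend_of_mem _ _ (left_mem_Icc.2 hb), hJ', integralOp_apply]
    exact intervalIntegral.integral_same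
  have hcont : Continuous (IccExtend hb J') := J'.continuous.Icc_extend'
  refine ⟨IccExtend hb Y, fun x => 1 + IccExtend hb J' x, (slSol_Icc_iff hb).2
    ⟨⟨(continuous_const.add hcont).intervalIntegrable _ _, ?_⟩,
      intervalIntegrable_mul_IccExtend hb (hq.sub intervalIntegrable_const) Y
        ⟨b, right_mem_Icc.2 hb⟩, ?_⟩, hY0, by rw [hJ'0, add_zero]⟩
  all_goals
    intro x hx
    rw [uIcc_of_le hb] at hx
  · rw [IccExtend_of_mem _ _ hx, hY0, zero_add, intervalIntegral.integral_add
      intervalIntegrable_const (hcont.intervalIntegrable _ _), hYx ⟨x, hx⟩]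
    simp
  · beta_reduce
    rw [hJ'0, add_zero, IccExtend_of_mem _ _ hx]
    rfl

lemma differentiable_toContinuousMap (hb : 0 ≤ b) (hq : IntervalIntegrable q volume 0 b)
    (hS : ∀ l, IsSineSol q b l (S l) (S' l)) :
    Differentiable ℂ fun l => (hS l).slSol.toContinuousMap hb :=
  differentiable_of_isUnit_of_apply_eq (f := ⟨fun x => (x : ℂ), by fun_prop⟩)
    ((differentiable_volterraOp hb hq).const_sub 1) (isUnit_one_sub_volterraOp hb hq) fun l => by
      ext x
      rw [(hS l).slSol.one_sub_volterraOp_apply hb hq, (hS l).apply_zero, (hS l).deriv_zero,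
        zero_add, one_mul]
      rfl

lemma differentiable_sineSol (hb : 0 ≤ b) (hq : IntervalIntegrable q volume 0 b)
    (hS : ∀ l, IsSineSol q b l (S l) (S' l)) (hx : x ∈ Icc 0 b) :
    Differentiable ℂ fun l => S l x :=
  (ContinuousMap.evalCLM (M := ℂ) ℂ (⟨x, hx⟩ : Icc 0 b)).differentiable.comp
    (differentiable_toContinuousMap hb hq hS)

lemma differentiable_integral_mul_sineSol {g : ℝ → ℂ} (hb : 0 ≤ b)
    (hq : IntervalIntegrable q volume 0 b) (hg : IntervalIntegrable g volume 0 b)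
    (hS : ∀ l, IsSineSol q b l (S l) (S' l)) (hx : x ∈ Icc 0 b) :
    Differentiable ℂ fun l => ∫ t in (0 : ℝ)..x, g t * S l t := by
  simpa only [Function.comp_def, ContinuousMap.evalCLM_apply, ContinuousLinearMap.comp_apply,
    SLSol.integralOp_toContinuousMap] using
    ((ContinuousMap.evalCLM ℂ (⟨x, hx⟩ : Icc 0 b)).comp (integralOp hb g hg)).differentiable.comp
      (differentiable_toContinuousMap hb hq hS)

lemma differentiable_deriv_sineSol (hb : 0 ≤ b) (hq : IntervalIntegrable q volume 0 b)
    (hS : ∀ l, IsSineSol q b l (S l) (S' l)) (hx : x ∈ Icc 0 b) :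
    Differentiable ℂ fun l => S' l x := by
  have hS' : ∀ l, S' l x =
      1 + ((∫ t in (0 : ℝ)..x, q t * S l t) - l * ∫ t in (0 : ℝ)..x, 1 * S l t) := by
    intro l
    rw [(hS l).slSol.deriv_eq_add_integralOp hb hq ⟨x, hx⟩, (hS l).deriv_zero,
      integralOp_sub_const hb hq]
    simp only [_root_.sub_apply, _root_.smul_apply, ContinuousMap.sub_apply,
      ContinuousMap.smul_apply, SLSol.integralOp_toContinuousMap, smul_eq_mul]
  rw [funext hS']
  exact ((differentiable_integral_mul_sineSol hb hq hq hS hx).sub (differentiable_id.mul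
    (differentiable_integral_mul_sineSol hb hq intervalIntegrable_const hS hx))).const_add 1

end CauchyProblem

namespace IsSineSol

variable {q : ℝ → ℂ} {l m : ℂ} {y y' z z' : ℝ → ℂ} {b x : ℝ}

lemma wronskian_eq (hy : IsSineSol q b l y y') (hz : IsSineSol q b m z z') (hb : 0 ≤ b)
    (hx : x ∈ Icc 0 b) :
    y x * z' x - y' x * z x = (l - m) * ∫ t in (0 : ℝ)..x, y t * z t := by
  rw [hy.slSol.wronskian_eq hz.slSol hb hx, hy.apply_zero, hz.apply_zero, zero_mul, mul_zero,
    sub_zero, zero_add, ← intervalIntegral.integral_const_mul]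
  simp only [sub_sub_sub_cancel_left]

lemma conj_comp {q : ℝ → ℝ} (h : IsSineSol (fun t => (q t : ℂ)) b l y y') (hb : 0 ≤ b) :
    IsSineSol (fun t => (q t : ℂ)) b (conj l) (fun x => conj (y x)) (fun x => conj (y' x)) :=
  ⟨h.slSol.conj_comp hb, by rw [h.apply_zero, map_zero], by rw [h.deriv_zero, map_one]⟩

lemma eq (hy : IsSineSol q b l y y') (hz : IsSineSol q b l z z') (hb : 0 ≤ b)
    (hq : IntervalIntegrable q volume 0 b) (hx : x ∈ Icc 0 b) : y x = z x ∧ y' x = z' x :=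
  hy.slSol.eq_of_eq_zero hz.slSol hb hq (hy.apply_zero.trans hz.apply_zero.symm)
    (hy.deriv_zero.trans hz.deriv_zero.symm) hx

lemma not_eqOn_zero (h : IsSineSol q b l y y') (hx : x ∈ Ioc 0 b) : ¬EqOn y 0 (Icc 0 x) := by
  intro hzero
  have hsub : Icc 0 x ⊆ Icc 0 b := Icc_subset_Icc_right hx.2
  have hderiv : EqOn y' 1 (Icc 0 x) := by
    intro t ht
    have hint : ∫ s in (0 : ℝ)..t, (q s - l) * y s = ∫ _ in (0 : ℝ)..t, (0 : ℂ) :=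
      intervalIntegral.integral_congr fun _ hs => by
        simp only [hzero (uIcc_subset_Icc (left_mem_Icc.2 hx.1.le) ht hs), Pi.zero_apply, mul_zero]
    rw [h.slSol.2.2.2 t (hsub ht), h.deriv_zero, hint, intervalIntegral.integral_zero, add_zero,
      Pi.one_apply]
  have hyx : y x = x := by
    have hint : ∫ t in (0 : ℝ)..x, y' t = ∫ _ in (0 : ℝ)..x, (1 : ℂ) :=
      intervalIntegral.integral_congr fun _ ht => hderiv (by rwa [uIcc_of_le hx.1.le] at ht)
    rw [h.slSol.2.2.1 x (Ioc_subset_Icc_self hx), h.apply_zero, hint]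
    simp
  have hx0 : (x : ℂ) = 0 := hyx.symm.trans (hzero (right_mem_Icc.2 hx.1.le))
  exact hx.1.ne' (ofReal_eq_zero.1 hx0)

lemma integral_norm_sq_pos (h : IsSineSol q b l y y') (hx : x ∈ Ioc 0 b) :
    0 < ∫ t in (0 : ℝ)..x, ‖y t‖ ^ 2 := by
  have hcont := (h.slSol.continuousOn (hx.1.le.trans hx.2)).mono (Icc_subset_Icc_right hx.2)
  refine intervalIntegral.integral_pos hx.1 (hcont.norm.pow 2) (fun t _ => by positivity) ?_
  by_contra! hnonpos
  refine h.not_eqOn_zero hx fun t ht => ?_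
  exact norm_eq_zero.1 ((sq_nonpos_iff _).1 (hnonpos t ht))

lemma integral_mul_conj_ne_zero (h : IsSineSol q b l y y') (hx : x ∈ Ioc 0 b) :
    ∫ t in (0 : ℝ)..x, y t * conj (y t) ≠ 0 := by
  simp only [Complex.mul_conj, normSq_eq_norm_sq, intervalIntegral.integral_ofReal]
  exact ofReal_ne_zero.2 (h.integral_norm_sq_pos hx).ne'

lemma conj_eq_self_of_eq_zero {q : ℝ → ℝ} (h : IsSineSol (fun t => (q t : ℂ)) b l y y')
    (hx : x ∈ Ioc 0 b) (h0 : y x = 0 ∨ y' x = 0) : conj l = l := by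
  have hb : 0 ≤ b := hx.1.le.trans hx.2
  have hlagrange := h.wronskian_eq (h.conj_comp hb) hb (Ioc_subset_Icc_self hx)
  have hwronskian : y x * conj (y' x) - y' x * conj (y x) = 0 := by
    rcases h0 with h0 | h0 <;> simp [h0]
  rw [hwronskian, eq_comm, mul_eq_zero, sub_eq_zero] at hlagrange
  exact (hlagrange.resolve_right (h.integral_mul_conj_ne_zero hx)).symm

end IsSineSol

section Simple

variable {q : ℝ → ℂ} {S S' : ℂ → ℝ → ℂ} {l : ℂ} {b : ℝ}

lemma hasDerivAt_wronskian_sineSol (hb : 0 ≤ b) (hq : IntervalIntegrable q volume 0 b)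
    (hS : ∀ l, IsSineSol q b l (S l) (S' l)) (l : ℂ) :
    HasDerivAt (fun m => S m b * S' l b - S' m b * S l b) (∫ t in (0 : ℝ)..b, S l t * S l t) l := by
  have hmem : b ∈ Icc 0 b := right_mem_Icc.2 hb
  have hlagrange : ∀ m, S m b * S' l b - S' m b * S l b =
      (m - l) * ∫ t in (0 : ℝ)..b, S l t * S m t := fun m => by
    rw [(hS m).wronskian_eq (hS l) hb hmem]
    simp only [mul_comm]
  have hint := differentiable_integral_mul_sineSol hb hq
    (((hS l).slSol.continuousOn hb).intervalIntegrable_of_Icc hb) hS hmem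
  rw [funext hlagrange]
  simpa only [id_eq, sub_self, zero_mul, add_zero, one_mul] using
    ((hasDerivAt_id l).sub_const l).fun_mul (hint l).hasDerivAt

lemma integral_sq_sineSol_ne_zero {q : ℝ → ℝ} (hb : 0 < b)
    (hq : IntervalIntegrable (fun t => (q t : ℂ)) volume 0 b)
    (hS : ∀ l, IsSineSol (fun t => (q t : ℂ)) b l (S l) (S' l))
    (h0 : S l b = 0 ∨ S' l b = 0) : ∫ t in (0 : ℝ)..b, S l t * S l t ≠ 0 := by
  have hmem : b ∈ Ioc 0 b := right_mem_Ioc.2 hb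
  have hreal := (hS l).conj_comp hb.le
  rw [(hS l).conj_eq_self_of_eq_zero hmem h0] at hreal
  convert (hS l).integral_mul_conj_ne_zero hmem using 1
  refine intervalIntegral.integral_congr fun t ht => ?_
  rw [uIcc_of_le hb.le] at ht
  exact congrArg _ ((hS l).eq hreal hb.le hq ht).1

lemma deriv_sineSol_ne_zero {q : ℝ → ℝ} (hb : 0 < b)
    (hq : IntervalIntegrable (fun t => (q t : ℂ)) volume 0 b)
    (hS : ∀ l, IsSineSol (fun t => (q t : ℂ)) b l (S l) (S' l)) (h0 : S l b = 0) :
    deriv (fun m => S m b) l ≠ 0 := by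
  intro hderiv
  have hd := (differentiable_sineSol hb.le hq hS (right_mem_Icc.2 hb.le) l).hasDerivAt
  have hw := hasDerivAt_wronskian_sineSol hb.le hq hS l
  simp only [h0, mul_zero, sub_zero] at hw
  refine integral_sq_sineSol_ne_zero hb hq hS (Or.inl h0) (hw.unique ?_)
  simpa only [hderiv, zero_mul] using hd.mul_const (S' l b)

lemma deriv_deriv_sineSol_ne_zero {q : ℝ → ℝ} (hb : 0 < b)
    (hq : IntervalIntegrable (fun t => (q t : ℂ)) volume 0 b)
    (hS : ∀ l, IsSineSol (fun t => (q t : ℂ)) b l (S l) (S' l)) (h0 : S' l b = 0) :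
    deriv (fun m => S' m b) l ≠ 0 := by
  intro hderiv
  have hd := (differentiable_deriv_sineSol hb.le hq hS (right_mem_Icc.2 hb.le) l).hasDerivAt
  have hw := hasDerivAt_wronskian_sineSol hb.le hq hS l
  simp only [h0, mul_zero, zero_sub] at hw
  refine integral_sq_sineSol_ne_zero hb hq hS (Or.inr h0) (hw.unique ?_)
  simpa only [hderiv, zero_mul, neg_zero] using (hd.mul_const (S l b)).fun_neg

end Simple

section Asymptotics

variable {q : ℝ → ℂ} {S S' : ℂ → ℝ → ℂ} {y y' z z' : ℝ → ℂ} {k l : ℂ} {b x : ℝ}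

lemma norm_exp_mul_I_le (z : ℂ) : ‖exp (z * I)‖ ≤ Real.exp |z.im| := by
  rw [Complex.norm_exp, mul_I_re]
  exact Real.exp_le_exp.2 (neg_le_abs _)

lemma norm_exp_neg_mul_I_le (z : ℂ) : ‖exp (-z * I)‖ ≤ Real.exp |z.im| := by
  simpa only [neg_im, abs_neg] using norm_exp_mul_I_le (-z)

lemma norm_cos_le_exp_abs_im (z : ℂ) : ‖cos z‖ ≤ Real.exp |z.im| := by
  rw [Complex.cos, norm_div, Complex.norm_two, div_le_iff₀ two_pos]
  linarith [norm_add_le (exp (z * I)) (exp (-z * I)), norm_exp_mul_I_le z, norm_exp_neg_mul_I_le z]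

lemma norm_sin_le_exp_abs_im (z : ℂ) : ‖sin z‖ ≤ Real.exp |z.im| := by
  rw [Complex.sin, norm_div, norm_mul, norm_I, mul_one, Complex.norm_two, div_le_iff₀ two_pos]
  linarith [norm_sub_le (exp (-z * I)) (exp (z * I)), norm_exp_mul_I_le z, norm_exp_neg_mul_I_le z]

lemma abs_im_mul_ofReal (k : ℂ) (hx : 0 ≤ x) : |(k * x).im| = |k.im| * x := by
  rw [im_mul_ofReal, abs_mul, abs_of_nonneg hx]

lemma norm_cos_mul_le (k : ℂ) (hx : 0 ≤ x) : ‖cos (k * x)‖ ≤ 1 * Real.exp (|k.im| * x) := by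
  rw [one_mul, ← abs_im_mul_ofReal k hx]
  exact norm_cos_le_exp_abs_im _

lemma norm_sin_mul_div_le (k : ℂ) (hx : 0 ≤ x) :
    ‖sin (k * x) / k‖ ≤ ‖k‖⁻¹ * Real.exp (|k.im| * x) := by
  rw [norm_div, div_eq_inv_mul, ← abs_im_mul_ofReal k hx]
  gcongr
  exact norm_sin_le_exp_abs_im _

lemma hasDerivAt_const_mul_ofReal (k : ℂ) (x : ℝ) : HasDerivAt (fun t : ℝ => k * t) k x := by
  simpa only [mul_one, id_eq, ofReal_one] using ((hasDerivAt_id x).ofReal_comp).const_mul k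

lemma hasDerivAt_sin_mul_ofReal (k : ℂ) (x : ℝ) :
    HasDerivAt (fun t : ℝ => sin (k * t)) (k * cos (k * x)) x := by
  rw [mul_comm]
  exact (Complex.hasDerivAt_sin _).comp x (hasDerivAt_const_mul_ofReal k x)

lemma hasDerivAt_cos_mul_ofReal (k : ℂ) (x : ℝ) :
    HasDerivAt (fun t : ℝ => cos (k * t)) (-k * sin (k * x)) x := by
  rw [neg_mul_comm, mul_comm]
  exact (Complex.hasDerivAt_cos _).comp x (hasDerivAt_const_mul_ofReal k x)

lemma slSol_cos (hb : 0 ≤ b) (k : ℂ) :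
    SLSol 0 (k ^ 2) (fun x => cos (k * x)) (fun x => -k * sin (k * x)) (Icc 0 b) := by
  refine (slSol_Icc_iff hb).2 ⟨.of_hasDerivAt (hasDerivAt_cos_mul_ofReal k) (by fun_prop) 0 b,
    .of_hasDerivAt (fun x => ?_) (by fun_prop) 0 b⟩
  refine ((hasDerivAt_sin_mul_ofReal k x).const_mul (-k)).congr_deriv ?_
  rw [Pi.zero_apply]
  ring

lemma isSineSol_sin (hb : 0 ≤ b) (hk : k ≠ 0) :
    IsSineSol 0 b (k ^ 2) (fun x => sin (k * x) / k) (fun x => cos (k * x)) := by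
  refine ⟨(slSol_Icc_iff hb).2 ⟨.of_hasDerivAt (fun x => ?_) (by fun_prop) 0 b,
    .of_hasDerivAt (fun x => ?_) (by fun_prop) 0 b⟩, by simp, by simp⟩
  · simpa only [mul_div_cancel_left₀ _ hk] using (hasDerivAt_sin_mul_ofReal k x).div_const k
  · refine (hasDerivAt_cos_mul_ofReal k x).congr_deriv ?_
    rw [Pi.zero_apply]
    field

lemma IsSineSol.duhamel (hy : IsSineSol q b l y y') (hz : SLSol 0 l z z' (Icc 0 b))
    (hx : x ∈ Icc 0 b) :
    y x * z' 0 + y' x * z 0 = z x + ∫ t in (0 : ℝ)..x, q t * z (x - t) * y t := by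
  have hsub : Icc 0 x ⊆ Icc 0 b := Icc_subset_Icc_right hx.2
  have hw := (hy.slSol.mono_set hsub).wronskian_eq ((hz.mono_set hsub).comp_sub_left hx.1) hx.1
    (right_mem_Icc.2 hx.1)
  have hint : ∫ t in (0 : ℝ)..x, q t * z (x - t) * y t =
      -∫ t in (0 : ℝ)..x, (((0 : ℝ → ℂ) (x - t) - l) - (q t - l)) * (y t * z (x - t)) := by
    rw [← intervalIntegral.integral_neg]
    congr 1 with t
    rw [Pi.zero_apply]
    ring
  rw [sub_self, sub_zero, hy.apply_zero, hy.deriv_zero] at hw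
  rw [hint]
  linear_combination -hw

lemma norm_integral_mul_comp_sub_mul_le (hq : IntervalIntegrable q volume 0 b) {τ C m : ℝ}
    (hx : x ∈ Icc 0 b) (hz : ∀ t, 0 ≤ t → ‖z t‖ ≤ C * Real.exp (τ * t))
    (hy : ∀ t ∈ Icc 0 b, ‖y t‖ ≤ m * Real.exp (τ * t)) :
    ‖∫ t in (0 : ℝ)..x, q t * z (x - t) * y t‖ ≤
      (∫ t in (0 : ℝ)..b, ‖q t‖) * (C * m * Real.exp (τ * x)) := by
  have hC : 0 ≤ C := by simpa using (norm_nonneg _).trans (hz 0 le_rfl)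
  have hm : 0 ≤ m := by
    simpa using (norm_nonneg _).trans (hy 0 (left_mem_Icc.2 (hx.1.trans hx.2)))
  calc ‖∫ t in (0 : ℝ)..x, q t * z (x - t) * y t‖
      ≤ ∫ t in (0 : ℝ)..x, ‖q t‖ * (C * m * Real.exp (τ * x)) := by
        refine intervalIntegral.norm_integral_le_of_norm_le hx.1 (.of_forall fun t ht => ?_)
          ((hq.mono_set (uIcc_subset_uIcc left_mem_uIcc (Icc_subset_uIcc hx))).norm.mul_const _)
        have hexp : Real.exp (τ * x) = Real.exp (τ * (x - t)) * Real.exp (τ * t) := by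
          rw [← Real.exp_add, ← mul_add, sub_add_cancel]
        calc ‖q t * z (x - t) * y t‖ = ‖q t‖ * (‖z (x - t)‖ * ‖y t‖) := by
              rw [norm_mul, norm_mul, mul_assoc]
          _ ≤ ‖q t‖ * ((C * Real.exp (τ * (x - t))) * (m * Real.exp (τ * t))) := by
              gcongr
              · exact hz _ (sub_nonneg.2 ht.2)
              · exact hy t ⟨ht.1.le, ht.2.trans hx.2⟩
          _ = ‖q t‖ * (C * m * Real.exp (τ * x)) := by
              rw [hexp]
              ring
    _ ≤ (∫ t in (0 : ℝ)..b, ‖q t‖) * (C * m * Real.exp (τ * x)) := by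
        rw [intervalIntegral.integral_mul_const]
        gcongr
        exact integral_norm_mono hq ⟨x, hx⟩

lemma exists_forall_norm_le_mul_exp (hb : 0 ≤ b) (hy : ContinuousOn y (Icc 0 b)) (τ : ℝ) :
    ∃ m, (∀ x ∈ Icc 0 b, ‖y x‖ ≤ m * Real.exp (τ * x)) ∧
      ∃ x ∈ Icc 0 b, ‖y x‖ = m * Real.exp (τ * x) := by
  have hcont : ContinuousOn (fun x => ‖y x‖ / Real.exp (τ * x)) (Icc 0 b) :=
    hy.norm.div (by fun_prop) fun x _ => (Real.exp_pos _).ne'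
  obtain ⟨x, hx, hmax⟩ := isCompact_Icc.exists_isMaxOn (nonempty_Icc.2 hb) hcont
  exact ⟨‖y x‖ / Real.exp (τ * x), fun t ht => (div_le_iff₀ (Real.exp_pos _)).1 (hmax ht),
    x, hx, (div_mul_cancel₀ _ (Real.exp_pos _).ne').symm⟩

namespace IsSineSol

lemma sub_sin_eq (h : IsSineSol q b (k ^ 2) y y') (hk : k ≠ 0) (hx : x ∈ Icc 0 b) :
    y x - sin (k * x) / k = ∫ t in (0 : ℝ)..x, q t * (sin (k * ↑(x - t)) / k) * y t := by
  have hsin := isSineSol_sin (hx.1.trans hx.2) hk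
  have hduhamel := h.duhamel hsin.slSol hx
  rw [hsin.apply_zero, hsin.deriv_zero] at hduhamel
  linear_combination hduhamel

lemma deriv_sub_cos_eq (h : IsSineSol q b (k ^ 2) y y') (hx : x ∈ Icc 0 b) :
    y' x - cos (k * x) = ∫ t in (0 : ℝ)..x, q t * cos (k * ↑(x - t)) * y t := by
  have hduhamel := h.duhamel (slSol_cos (hx.1.trans hx.2) k) hx
  simp only [ofReal_zero, mul_zero, sin_zero, cos_zero, zero_add, mul_one] at hduhamel
  linear_combination hduhamel

lemma norm_le (h : IsSineSol q b (k ^ 2) y y') (hq : IntervalIntegrable q volume 0 b) (hk : k ≠ 0)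
    (hqk : 2 * (∫ t in (0 : ℝ)..b, ‖q t‖) ≤ ‖k‖) (hx : x ∈ Icc 0 b) :
    ‖y x‖ ≤ 2 / ‖k‖ * Real.exp (|k.im| * x) := by
  have hb : 0 ≤ b := hx.1.trans hx.2
  have hk' : 0 < ‖k‖ := norm_pos_iff.2 hk
  obtain ⟨m, hm, x₀, hx₀, hmx₀⟩ :=
    exists_forall_norm_le_mul_exp hb (h.slSol.continuousOn hb) |k.im|
  refine (hm x hx).trans (mul_le_mul_of_nonneg_right ?_ (Real.exp_pos _).le)
  have hm0 : 0 ≤ m := by simpa using (norm_nonneg _).trans (hm 0 (left_mem_Icc.2 hb))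
  have hm_le : m ≤ ‖k‖⁻¹ + (∫ t in (0 : ℝ)..b, ‖q t‖) * (‖k‖⁻¹ * m) := by
    have hint := norm_integral_mul_comp_sub_mul_le (z := fun t => sin (k * t) / k) hq hx₀
      (fun t ht => norm_sin_mul_div_le k ht) hm
    rw [← h.sub_sin_eq hk hx₀] at hint
    have htri := (norm_sub_norm_le _ _).trans hint
    rw [hmx₀] at htri
    refine le_of_mul_le_mul_right ?_ (Real.exp_pos (|k.im| * x₀))
    linarith [norm_sin_mul_div_le k hx₀.1]
  have hm_le' : m * ‖k‖ ≤ 1 + (∫ t in (0 : ℝ)..b, ‖q t‖) * m := by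
    calc m * ‖k‖ ≤ (‖k‖⁻¹ + (∫ t in (0 : ℝ)..b, ‖q t‖) * (‖k‖⁻¹ * m)) * ‖k‖ := by gcongr
      _ = 1 + (∫ t in (0 : ℝ)..b, ‖q t‖) * m := by field
  rw [le_div_iff₀ hk']
  nlinarith

end IsSineSol

lemma isBigO_sineSol_sub_sin (hb : 0 ≤ b) (hq : IntervalIntegrable q volume 0 b)
    (hS : ∀ l, IsSineSol q b l (S l) (S' l)) :
    (fun k : ℂ => S (k ^ 2) b - sin (k * b) / k) =O[Bornology.cobounded ℂ]
      fun k => Real.exp (|k.im| * b) / ‖k‖ ^ 2 := by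
  refine .of_bound (2 * ∫ t in (0 : ℝ)..b, ‖q t‖) ?_
  filter_upwards [Bornology.eventually_ne_cobounded 0,
    tendsto_norm_cobounded_atTop.eventually_ge_atTop _] with k hk hqk
  rw [(hS _).sub_sin_eq hk (right_mem_Icc.2 hb), Real.norm_of_nonneg (by positivity)]
  refine (norm_integral_mul_comp_sub_mul_le (z := fun t => sin (k * t) / k) hq
    (right_mem_Icc.2 hb) (fun t ht => norm_sin_mul_div_le k ht)
    fun t ht => (hS _).norm_le hq hk hqk ht).trans_eq ?_
  field

lemma isBigO_deriv_sineSol_sub_cos (hb : 0 ≤ b) (hq : IntervalIntegrable q volume 0 b)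
    (hS : ∀ l, IsSineSol q b l (S l) (S' l)) :
    (fun k : ℂ => S' (k ^ 2) b - cos (k * b)) =O[Bornology.cobounded ℂ]
      fun k => Real.exp (|k.im| * b) / ‖k‖ := by
  refine .of_bound (2 * ∫ t in (0 : ℝ)..b, ‖q t‖) ?_
  filter_upwards [Bornology.eventually_ne_cobounded 0,
    tendsto_norm_cobounded_atTop.eventually_ge_atTop _] with k hk hqk
  rw [(hS _).deriv_sub_cos_eq (right_mem_Icc.2 hb), Real.norm_of_nonneg (by positivity)]
  refine (norm_integral_mul_comp_sub_mul_le (z := fun t => cos (k * t)) hq (right_mem_Icc.2 hb)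
    (fun t ht => norm_cos_mul_le k ht) fun t ht => (hS _).norm_le hq hk hqk ht).trans_eq ?_
  ring

end Asymptotics

section Contour

variable {N D G : ℂ → ℂ} {b : ℝ}

lemma norm_sq_sin (w : ℂ) : ‖sin w‖ ^ 2 = Real.sin w.re ^ 2 + Real.sinh w.im ^ 2 := by
  have hsin : sin w = ((Real.sin w.re * Real.cosh w.im : ℝ) : ℂ) +
      ((Real.cos w.re * Real.sinh w.im : ℝ) : ℂ) * I := by
    rw [Complex.sin_eq]
    push_cast
    ring
  rw [← normSq_eq_norm_sq, hsin, normSq_add_mul_I, mul_pow, mul_pow, Real.cosh_sq]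
  linear_combination Real.sinh w.im ^ 2 * Real.sin_sq_add_cos_sq w.re

lemma norm_sq_cos (w : ℂ) : ‖cos w‖ ^ 2 = Real.cos w.re ^ 2 + Real.sinh w.im ^ 2 := by
  have him : (w + ↑(Real.pi / 2)).im = w.im := by rw [add_im, ofReal_im, add_zero]
  have hshift := norm_sq_sin (w + ↑(Real.pi / 2))
  rwa [add_re, ofReal_re, him, Real.sin_add_pi_div_two, ofReal_div, ofReal_ofNat,
    Complex.sin_add_pi_div_two] at hshift

lemma sq_exp_abs_div_four_le {c t : ℝ} (hc : 0 ≤ c) (h : 1 / 2 ≤ c ∨ 2 ≤ |t|) :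
    (Real.exp |t| / 4) ^ 2 ≤ c + Real.sinh t ^ 2 := by
  have hexp := Real.exp_pos |t|
  have hcosh : Real.exp |t| / 2 ≤ Real.cosh t := by
    rw [← Real.cosh_abs, Real.cosh_eq]
    linarith [Real.exp_pos (-|t|)]
  rw [Real.sinh_sq]
  rcases h with h | h
  · nlinarith [Real.one_le_cosh t]
  · nlinarith [Real.add_one_le_exp |t|]

lemma exp_abs_im_div_four_le_norm_sin {w : ℂ} (h : 1 / 2 ≤ Real.sin w.re ^ 2 ∨ 2 ≤ |w.im|) :
    Real.exp |w.im| / 4 ≤ ‖sin w‖ :=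
  le_of_sq_le_sq (norm_sq_sin w ▸ sq_exp_abs_div_four_le (sq_nonneg _) h) (norm_nonneg _)

lemma exp_abs_im_div_four_le_norm_cos {w : ℂ} (h : 1 / 2 ≤ Real.cos w.re ^ 2 ∨ 2 ≤ |w.im|) :
    Real.exp |w.im| / 4 ≤ ‖cos w‖ :=
  le_of_sq_le_sq (norm_sq_cos w ▸ sq_exp_abs_div_four_le (sq_nonneg _) h) (norm_nonneg _)

lemma cos_two_mul_eq_zero_of_abs_eq {x : ℝ} {n : ℕ} (hx : |x| = (n + 1 / 4) * Real.pi) :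
    Real.cos (2 * x) = 0 := by
  have hangle : |2 * x| = Real.pi / 2 + n * (2 * Real.pi) := by
    rw [abs_mul, abs_two, hx]
    ring
  rw [← Real.cos_abs, hangle, Real.cos_add_nat_mul_two_pi, Real.cos_pi_div_two]

/-- The filter of `k → ∞` in `ℂ` with `k` away from the zeros of `sin (k * b)` and `cos (k * b)`:
there both functions are comparable to `exp (|k.im| * b)`. -/
noncomputable def coboundedAwayTrigZeros (b : ℝ) : Filter ℂ :=
  Bornology.cobounded ℂ ⊓ 𝓟 {k | Real.exp (|k.im| * b) / 4 ≤ ‖sin (k * b)‖ ∧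
    Real.exp (|k.im| * b) / 4 ≤ ‖cos (k * b)‖}

lemma coboundedAwayTrigZeros_le : coboundedAwayTrigZeros b ≤ Bornology.cobounded ℂ := inf_le_left

lemma exp_div_four_le_of_mem_frontier (hb : 0 ≤ b) {n : ℕ} (hn : 2 ≤ n) {k : ℂ}
    (hk : |k.re| * b = (n + 1 / 4) * Real.pi ∨ |k.im| * b = n) :
    Real.exp (|k.im| * b) / 4 ≤ ‖sin (k * b)‖ ∧ Real.exp (|k.im| * b) / 4 ≤ ‖cos (k * b)‖ := by
  have hre : |(k * b).re| = |k.re| * b := by rw [re_mul_ofReal, abs_mul, abs_of_nonneg hb]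
  rw [← abs_im_mul_ofReal k hb] at hk ⊢
  rw [← hre] at hk
  rcases hk with hk | hk
  · have hcos := cos_two_mul_eq_zero_of_abs_eq hk
    refine ⟨exp_abs_im_div_four_le_norm_sin (.inl ?_), exp_abs_im_div_four_le_norm_cos (.inl ?_)⟩
    · rw [Real.sin_sq_eq_half_sub, hcos, zero_div, sub_zero]
    · rw [Real.cos_sq, hcos, zero_div, add_zero]
  · have him : 2 ≤ |(k * b).im| := hk ▸ Nat.ofNat_le_cast.2 hn
    exact ⟨exp_abs_im_div_four_le_norm_sin (.inr him), exp_abs_im_div_four_le_norm_cos (.inr him)⟩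

lemma norm_le_of_forall_mem_frontier_rectangle (hG : Differentiable ℂ G) {r s C : ℝ}
    (h : ∀ z, |z.re| = r ∨ |z.im| = s → ‖G z‖ ≤ C) {k : ℂ} (hre : |k.re| < r) (him : |k.im| < s) :
    ‖G k‖ ≤ C := by
  have hr : 0 < r := (abs_nonneg _).trans_lt hre
  have hs : 0 < s := (abs_nonneg _).trans_lt him
  refine norm_le_of_forall_mem_frontier_norm_le (U := Ioo (-r) r ×ℂ Ioo (-s) s)
    ((Metric.isBounded_Ioo _ _).reProdIm (Metric.isBounded_Ioo _ _)) hG.diffContOnCl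
    (fun z hz => h z ?_) (subset_closure ⟨abs_lt.1 hre, abs_lt.1 him⟩)
  rw [frontier_reProdIm, frontier_Ioo (neg_lt_self hr), frontier_Ioo (neg_lt_self hs)] at hz
  rcases hz with hz | hz
  · exact .inr ((abs_eq hs.le).2 hz.2.symm)
  · exact .inl ((abs_eq hr.le).2 hz.1.symm)

lemma eq_zero_of_tendsto_coboundedAwayTrigZeros (hb : 0 < b) (hG : Differentiable ℂ G)
    (h : Tendsto G (coboundedAwayTrigZeros b) (𝓝 0)) : G = 0 := by
  ext k
  refine norm_le_zero_iff.1 (le_of_forall_gt_imp_ge_of_dense fun ε hε => ?_)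
  have hsmall := h.norm.eventually_le_const (norm_zero.trans_lt hε)
  obtain ⟨r, -, hr⟩ := hasBasis_cobounded_norm.eventually_iff.1 (eventually_inf_principal.1 hsmall)
  obtain ⟨n, hn⟩ := exists_nat_gt (2 + |r| * b + ‖k‖ * b)
  have hkb : 0 ≤ ‖k‖ * b := by positivity
  have hrb : 0 ≤ |r| * b := by positivity
  have hn_le : (n : ℝ) ≤ (n + 1 / 4) * Real.pi := by nlinarith [Real.pi_gt_three]
  have hn_two : 2 ≤ n := by
    have : (2 : ℝ) < n := by linarith
    exact_mod_cast this.le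
  refine norm_le_of_forall_mem_frontier_rectangle hG (r := (n + 1 / 4) * Real.pi / b) (s := n / b)
    (fun z hz => ?_) ?_ ?_
  · rw [eq_div_iff hb.ne', eq_div_iff hb.ne'] at hz
    refine hr ?_ (exp_div_four_le_of_mem_frontier hb.le hn_two hz)
    refine (le_abs_self r).trans (le_of_mul_le_mul_right ?_ hb)
    rcases hz with hz | hz
    · linarith [mul_le_mul_of_nonneg_right (abs_re_le_norm z) hb.le]
    · linarith [mul_le_mul_of_nonneg_right (abs_im_le_norm z) hb.le]
  · rw [lt_div_iff₀ hb]
    linarith [mul_le_mul_of_nonneg_right (abs_re_le_norm k) hb.le]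
  · rw [lt_div_iff₀ hb]
    linarith [mul_le_mul_of_nonneg_right (abs_im_le_norm k) hb.le]

lemma differentiable_dslope (hG : Differentiable ℂ G) (z : ℂ) : Differentiable ℂ (dslope G z) :=
  differentiableOn_univ.1 ((differentiableOn_dslope univ_mem).2 hG.differentiableOn)

lemma div_eq_dslope_div_dslope {z w : ℂ} (hwz : w ≠ z) (hN : N z = 0) (hD : D z = 0) :
    N w / D w = dslope N z w / dslope D z w := by
  have hNw := sub_smul_dslope N z w
  have hDw := sub_smul_dslope D z w
  rw [hN, sub_zero, smul_eq_mul] at hNw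
  rw [hD, sub_zero, smul_eq_mul] at hDw
  rw [← hNw, ← hDw, mul_div_mul_left _ _ (sub_ne_zero.2 hwz)]

lemma exists_differentiable_eq_mul (hN : Differentiable ℂ N) (hD : Differentiable ℂ D)
    (hsimple : ∀ z, D z = 0 → deriv D z ≠ 0) (hzero : ∀ z, D z = 0 → N z = 0) :
    ∃ Q : ℂ → ℂ, Differentiable ℂ Q ∧ ∀ z, N z = Q z * D z := by
  classical
  refine ⟨fun z => if D z = 0 then deriv N z / deriv D z else N z / D z, fun z => ?_, fun z => ?_⟩
  · by_cases hz : D z = 0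
    · have hne : dslope D z z ≠ 0 := dslope_same D z ▸ hsimple z hz
      have hne_nhds := (differentiable_dslope hD z z).continuousAt.eventually_ne hne
      refine ((differentiable_dslope hN z z).fun_div (differentiable_dslope hD z z)
        hne).congr_of_eventuallyEq ?_
      filter_upwards [hne_nhds] with w hw
      rcases eq_or_ne w z with rfl | hwz
      · rw [if_pos hz, dslope_same, dslope_same]
      · have hDw : D w ≠ 0 := by
          have hfactor := sub_smul_dslope D z w
          rw [hz, sub_zero] at hfactor
          exact hfactor ▸ smul_ne_zero (sub_ne_zero.2 hwz) hw
        rw [if_neg hDw, div_eq_dslope_div_dslope hwz (hzero z hz) hz]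
    · refine ((hN z).fun_div (hD z) hz).congr_of_eventuallyEq ?_
      filter_upwards [(hD z).continuousAt.eventually_ne hz] with w hw
      rw [if_neg hw]
  · by_cases hz : D z = 0
    · rw [hzero z hz, hz, mul_zero]
    · simp only [if_neg hz, div_mul_cancel₀ _ hz]

lemma eq_zero_of_isLittleO_comp_sq (hb : 0 < b) (hN : Differentiable ℂ N)
    (hD : Differentiable ℂ D) (hsimple : ∀ z, D z = 0 → deriv D z ≠ 0)
    (hzero : ∀ z, D z = 0 → N z = 0)
    (hne : ∀ᶠ k in coboundedAwayTrigZeros b, D (k ^ 2) ≠ 0)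
    (hlittle : (fun k => N (k ^ 2)) =o[coboundedAwayTrigZeros b] fun k => D (k ^ 2)) : N = 0 := by
  obtain ⟨Q, hQ, hNQ⟩ := exists_differentiable_eq_mul hN hD hsimple hzero
  have hQ0 : (fun k => Q (k ^ 2)) = 0 := by
    refine eq_zero_of_tendsto_coboundedAwayTrigZeros hb (hQ.comp (by fun_prop)) ?_
    refine hlittle.tendsto_div_nhds_zero.congr' ?_
    filter_upwards [hne] with k hk
    rw [hNQ, mul_div_cancel_right₀ _ hk]
  ext z
  obtain ⟨k, rfl⟩ := IsAlgClosed.exists_pow_nat_eq z two_pos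
  rw [hNQ, congrFun hQ0 k, Pi.zero_apply, zero_mul, Pi.zero_apply]

end Contour

section CharacteristicFunctions

variable {q qt : ℝ → ℂ} {S S' St St' : ℂ → ℝ → ℂ} {b x : ℝ}

lemma isLittleO_div_norm (f : ℂ → ℝ) : (fun k => f k / ‖k‖) =o[Bornology.cobounded ℂ] f := by
  have hinv : (fun k : ℂ => ‖k‖⁻¹) =o[Bornology.cobounded ℂ] fun _ => (1 : ℝ) :=
    (isLittleO_one_iff ℝ).2 (tendsto_inv_atTop_zero.comp tendsto_norm_cobounded_atTop)
  simpa only [div_eq_mul_inv, mul_one] using (isBigO_refl f _).mul_isLittleO hinv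

lemma isBigO_exp_div_norm_sineSol (hb : 0 ≤ b) (hq : IntervalIntegrable q volume 0 b)
    (hS : ∀ l, IsSineSol q b l (S l) (S' l)) :
    (fun k : ℂ => Real.exp (|k.im| * b) / ‖k‖) =O[coboundedAwayTrigZeros b]
      fun k => S (k ^ 2) b := by
  have hsin : (fun k : ℂ => Real.exp (|k.im| * b) / ‖k‖) =O[coboundedAwayTrigZeros b]
      fun k => sin (k * b) / k := by
    refine .of_bound 4 (eventually_inf_principal.2 (.of_forall fun k hk => ?_))
    rw [Real.norm_of_nonneg (by positivity), norm_div, ← mul_div_assoc]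
    gcongr
    linarith [hk.1]
  have herror : (fun k : ℂ => S (k ^ 2) b - sin (k * b) / k) =o[coboundedAwayTrigZeros b]
      fun k => Real.exp (|k.im| * b) / ‖k‖ := by
    refine IsBigO.trans_isLittleO ?_
      ((isLittleO_div_norm fun k => Real.exp (|k.im| * b) / ‖k‖).mono coboundedAwayTrigZeros_le)
    simpa only [div_div, ← sq] using
      (isBigO_sineSol_sub_sin hb hq hS).mono coboundedAwayTrigZeros_le
  exact hsin.trans (IsEquivalent.isBigO_symm (herror.trans_isBigO hsin))

lemma isBigO_exp_deriv_sineSol (hb : 0 ≤ b) (hq : IntervalIntegrable q volume 0 b)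
    (hS : ∀ l, IsSineSol q b l (S l) (S' l)) :
    (fun k : ℂ => Real.exp (|k.im| * b)) =O[coboundedAwayTrigZeros b] fun k => S' (k ^ 2) b := by
  have hcos : (fun k : ℂ => Real.exp (|k.im| * b)) =O[coboundedAwayTrigZeros b]
      fun k => cos (k * b) := by
    refine .of_bound 4 (eventually_inf_principal.2 (.of_forall fun k hk => ?_))
    rw [Real.norm_of_nonneg (Real.exp_pos _).le]
    linarith [hk.2]
  have herror : (fun k : ℂ => S' (k ^ 2) b - cos (k * b)) =o[coboundedAwayTrigZeros b]
      fun k => Real.exp (|k.im| * b) :=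
    ((isBigO_deriv_sineSol_sub_cos hb hq hS).trans_isLittleO (isLittleO_div_norm _)).mono
      coboundedAwayTrigZeros_le
  exact hcos.trans (IsEquivalent.isBigO_symm (herror.trans_isBigO hcos))

lemma isBigO_sineSol (hq : IntervalIntegrable q volume 0 b)
    (hS : ∀ l, IsSineSol q b l (S l) (S' l)) (hx : x ∈ Icc 0 b) :
    (fun k : ℂ => S (k ^ 2) x) =O[Bornology.cobounded ℂ]
      fun k => Real.exp (|k.im| * x) / ‖k‖ := by
  refine .of_bound 2 ?_
  filter_upwards [Bornology.eventually_ne_cobounded 0,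
    tendsto_norm_cobounded_atTop.eventually_ge_atTop _] with k hk hqk
  rw [Real.norm_of_nonneg (by positivity)]
  exact ((hS _).norm_le hq hk hqk hx).trans_eq (by ring)

lemma eq_zero_of_isBigO_of_sineSol_zeros {q : ℝ → ℝ} {N : ℂ → ℂ} (hb : 0 < b)
    (hq : IntervalIntegrable (fun t => (q t : ℂ)) volume 0 b)
    (hS : ∀ l, IsSineSol (fun t => (q t : ℂ)) b l (S l) (S' l)) (hN : Differentiable ℂ N)
    (hzero : ∀ l, S l b = 0 → N l = 0)
    (hbig : (fun k => N (k ^ 2)) =O[Bornology.cobounded ℂ]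
      fun k => Real.exp (|k.im| * b) / ‖k‖ ^ 2) : N = 0 := by
  have hexp := isBigO_exp_div_norm_sineSol hb.le hq hS
  have hlittle := isLittleO_div_norm fun k => Real.exp (|k.im| * b) / ‖k‖
  simp only [div_div, ← sq] at hlittle
  refine eq_zero_of_isLittleO_comp_sq hb hN (differentiable_sineSol hb.le hq hS
    (right_mem_Icc.2 hb.le)) (fun l => deriv_sineSol_ne_zero hb hq hS) hzero ?_
    (((hbig.trans_isLittleO hlittle).mono coboundedAwayTrigZeros_le).trans_isBigO hexp)
  filter_upwards [hexp.eq_zero_imp,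
    coboundedAwayTrigZeros_le (Bornology.eventually_ne_cobounded 0)] with k himp hk hSk
  exact (div_pos (Real.exp_pos _) (norm_pos_iff.2 hk)).ne' (himp hSk)

lemma sineSol_eq_of_zeros_subset {q : ℝ → ℝ} (hb : 0 < b)
    (hq : IntervalIntegrable (fun t => (q t : ℂ)) volume 0 b)
    (hqt : IntervalIntegrable qt volume 0 b)
    (hS : ∀ l, IsSineSol (fun t => (q t : ℂ)) b l (S l) (S' l))
    (hSt : ∀ l, IsSineSol qt b l (St l) (St' l))
    (hzero : {l | S l b = 0} ⊆ {l | St l b = 0}) (l : ℂ) : S l b = St l b := by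
  have hmem : b ∈ Icc 0 b := right_mem_Icc.2 hb.le
  refine sub_eq_zero.1 (congrFun (eq_zero_of_isBigO_of_sineSol_zeros hb hq hS
    (N := fun l => S l b - St l b) ((differentiable_sineSol hb.le hq hS hmem).sub
    (differentiable_sineSol hb.le hqt hSt hmem)) (fun m hm => ?_) ?_) l)
  · rw [hm, hzero hm, sub_zero]
  · simpa only [sub_sub_sub_cancel_right] using
      (isBigO_sineSol_sub_sin hb.le hq hS).sub (isBigO_sineSol_sub_sin hb.le hqt hSt)

lemma deriv_sineSol_eq_of_zeros_subset {q : ℝ → ℝ} (hb : 0 < b)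
    (hq : IntervalIntegrable (fun t => (q t : ℂ)) volume 0 b)
    (hqt : IntervalIntegrable qt volume 0 b)
    (hS : ∀ l, IsSineSol (fun t => (q t : ℂ)) b l (S l) (S' l))
    (hSt : ∀ l, IsSineSol qt b l (St l) (St' l))
    (hzero : {l | S' l b = 0} ⊆ {l | St' l b = 0}) (l : ℂ) : S' l b = St' l b := by
  have hmem : b ∈ Icc 0 b := right_mem_Icc.2 hb.le
  have hD := differentiable_deriv_sineSol hb.le hq hS hmem
  have hexp := isBigO_exp_deriv_sineSol hb.le hq hS
  have hdiff := (isBigO_deriv_sineSol_sub_cos hb.le hq hS).sub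
    (isBigO_deriv_sineSol_sub_cos hb.le hqt hSt)
  simp only [sub_sub_sub_cancel_right] at hdiff
  refine sub_eq_zero.1 (congrFun (eq_zero_of_isLittleO_comp_sq hb
    (N := fun l => S' l b - St' l b) (hD.sub (differentiable_deriv_sineSol hb.le hqt hSt hmem)) hD
    (fun m => deriv_deriv_sineSol_ne_zero hb hq hS) (fun m hm => ?_) ?_
    (((hdiff.trans_isLittleO (isLittleO_div_norm _)).mono
      coboundedAwayTrigZeros_le).trans_isBigO hexp)) l)
  · rw [hm, hzero hm, sub_zero]
  · filter_upwards [hexp.eq_zero_imp] with k himp hSk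
    exact (Real.exp_pos _).ne' (himp hSk)

end CharacteristicFunctions

section Reflection

variable {q qt : ℝ → ℂ} {l : ℂ} {y y' z z' r r' rt rt' : ℝ → ℂ} {b x : ℝ}

lemma intervalIntegrable_comp_sub_left (hq : IntervalIntegrable q volume 0 b) :
    IntervalIntegrable (fun t => q (b - t)) volume 0 b := by
  simpa only [sub_self, sub_zero] using (hq.comp_sub_left b).symm

namespace IsSineSol

lemma apply_sub_of_eq_zero (hy : IsSineSol q b l y y')
    (hr : IsSineSol (fun t => q (b - t)) b l r r') (hq : IntervalIntegrable q volume 0 b)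
    (h0 : y b = 0) (hx : x ∈ Icc 0 b) : y (b - x) = -y' b * r x := by
  have hb : 0 ≤ b := hx.1.trans hx.2
  refine ((hy.slSol.comp_sub_left hb).eq_of_eq_zero (hr.slSol.const_mul hb (-y' b)) hb
    (intervalIntegrable_comp_sub_left hq) ?_ ?_ hx).1
  · rw [sub_zero, h0, hr.apply_zero, mul_zero]
  · rw [sub_zero, hr.deriv_zero, mul_one]

lemma wronskian_comp_sub_left (hy : IsSineSol q b l y y')
    (hr : IsSineSol (fun t => q (b - t)) b l r r') (hx : x ∈ Icc 0 b) :
    y (b - x) * r' x + y' (b - x) * r x = y b := by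
  have hb : 0 ≤ b := hx.1.trans hx.2
  have hw := (hy.slSol.comp_sub_left hb).wronskian_eq hr.slSol hb hx
  simp only [sub_self, zero_mul, intervalIntegral.integral_zero, hr.apply_zero, hr.deriv_zero,
    mul_zero, mul_one, add_zero, sub_zero] at hw
  linear_combination hw

lemma sq_eq_of_cross_mul_eq (hy : IsSineSol q b l y y') (hz : IsSineSol qt b l z z')
    (hr : IsSineSol (fun t => q (b - t)) b l r r')
    (hrt : IsSineSol (fun t => qt (b - t)) b l rt rt') (hend : y b = z b) (hne : y b ≠ 0)
    (hcross : ∀ x ∈ Ioo 0 b, rt x * y (b - x) = r x * z (b - x)) (hx : x ∈ Ioo 0 b) :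
    y x ^ 2 = z x ^ 2 := by
  have hb : 0 ≤ b := hx.1.le.trans hx.2.le
  obtain ⟨t, ht, rfl⟩ : ∃ t ∈ Ioo 0 b, b - t = x :=
    ⟨b - x, ⟨sub_pos.2 hx.2, sub_lt_self b hx.1⟩, sub_sub_cancel b x⟩
  have hderiv := ((hrt.slSol.hasDerivAt hb ht).mul
    ((hy.slSol.comp_sub_left hb).hasDerivAt hb ht)).unique <|
      ((hr.slSol.hasDerivAt hb ht).mul ((hz.slSol.comp_sub_left hb).hasDerivAt hb ht))
        |>.congr_of_eventuallyEq (eventuallyEq_of_mem (isOpen_Ioo.mem_nhds ht) hcross)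
  have hwr := hy.wronskian_comp_sub_left hr (Ioo_subset_Icc_self ht)
  have hwrt := hz.wronskian_comp_sub_left hrt (Ioo_subset_Icc_self ht)
  rw [← hend] at hwrt
  apply mul_left_cancel₀ hne
  linear_combination (y (b - t) * z (b - t)) * hderiv - y (b - t) ^ 2 * hwrt +
    z (b - t) ^ 2 * hwr + (y (b - t) * z' (b - t) + z (b - t) * y' (b - t)) * hcross t ht

end IsSineSol

lemma isBigO_sineSol_mul_sineSol_sub {S S' T T' : ℂ → ℝ → ℂ}
    (hq : IntervalIntegrable q volume 0 b) (hqt : IntervalIntegrable qt volume 0 b)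
    (hS : ∀ l, IsSineSol q b l (S l) (S' l)) (hT : ∀ l, IsSineSol qt b l (T l) (T' l))
    (hx : x ∈ Icc 0 b) :
    (fun k : ℂ => S (k ^ 2) x * T (k ^ 2) (b - x)) =O[Bornology.cobounded ℂ]
      fun k => Real.exp (|k.im| * b) / ‖k‖ ^ 2 := by
  have hx' : b - x ∈ Icc 0 b := ⟨sub_nonneg.2 hx.2, sub_le_self b hx.1⟩
  refine ((isBigO_sineSol hq hS hx).mul (isBigO_sineSol hqt hT hx')).congr_right fun k => ?_
  rw [div_mul_div_comm, ← Real.exp_add, ← mul_add, add_sub_cancel, sq]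

lemma sineSol_cross_mul_eq {q : ℝ → ℝ} {S S' St St' R R' Rt Rt' : ℂ → ℝ → ℂ} (hb : 0 < b)
    (hq : IntervalIntegrable (fun t => (q t : ℂ)) volume 0 b)
    (hqt : IntervalIntegrable qt volume 0 b)
    (hS : ∀ l, IsSineSol (fun t => (q t : ℂ)) b l (S l) (S' l))
    (hSt : ∀ l, IsSineSol qt b l (St l) (St' l))
    (hR : ∀ l, IsSineSol (fun t => (q (b - t) : ℂ)) b l (R l) (R' l))
    (hRt : ∀ l, IsSineSol (fun t => qt (b - t)) b l (Rt l) (Rt' l))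
    (heq : ∀ l, S l b = St l b) (heq' : ∀ l, S' l b = St' l b) (hx : x ∈ Icc 0 b) (l : ℂ) :
    Rt l x * S l (b - x) = R l x * St l (b - x) := by
  have hx' : b - x ∈ Icc 0 b := ⟨sub_nonneg.2 hx.2, sub_le_self b hx.1⟩
  have hqr := intervalIntegrable_comp_sub_left hq
  have hqtr := intervalIntegrable_comp_sub_left hqt
  refine sub_eq_zero.1 (congrFun (eq_zero_of_isBigO_of_sineSol_zeros hb hq hS
    (N := fun l => Rt l x * S l (b - x) - R l x * St l (b - x)) ?_ (fun m hm => ?_) ?_) l)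
  · exact ((differentiable_sineSol hb.le hqtr hRt hx).mul
      (differentiable_sineSol hb.le hq hS hx')).sub
      ((differentiable_sineSol hb.le hqr hR hx).mul (differentiable_sineSol hb.le hqt hSt hx'))
  · rw [(hS m).apply_sub_of_eq_zero (hR m) hq hm hx,
      (hSt m).apply_sub_of_eq_zero (hRt m) hqt ((heq m).symm.trans hm) hx, heq']
    ring
  · exact (isBigO_sineSol_mul_sineSol_sub hqtr hq hRt hS hx).sub
      (isBigO_sineSol_mul_sineSol_sub hqr hqt hR hSt hx)

end Reflection

theorem statement11_general {b : ℝ} (hb : 0 < b) {q : ℝ → ℝ} {qt : ℝ → ℂ}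
    (hq : IntervalIntegrable (fun t => (q t : ℂ)) volume 0 b)
    (hqt : IntervalIntegrable qt volume 0 b) {S S' St St' : ℂ → ℝ → ℂ}
    (hS : ∀ l, IsSineSol (fun t => (q t : ℂ)) b l (S l) (S' l))
    (hSt : ∀ l, IsSineSol qt b l (St l) (St' l))
    (hDD : {l | S l b = 0} ⊆ {l | St l b = 0}) (hDN : {l | S' l b = 0} ⊆ {l | St' l b = 0}) :
    ∀ᵐ x : ℝ, x ∈ Ioo 0 b → (q x : ℂ) = qt x := by
  have heq := sineSol_eq_of_zeros_subset hb hq hqt hS hSt hDD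
  have heq' := deriv_sineSol_eq_of_zeros_subset hb hq hqt hS hSt hDN
  choose R R' hR using exists_isSineSol hb.le (intervalIntegrable_comp_sub_left hq)
  choose Rt Rt' hRt using exists_isSineSol hb.le (intervalIntegrable_comp_sub_left hqt)
  have hne : ∀ x ∈ Ioc 0 b, S I x ≠ 0 := fun x hx h0 =>
    one_ne_zero (I_im.symm.trans (conj_eq_iff_im.1 ((hS I).conj_eq_self_of_eq_zero hx (.inl h0))))
  refine SLSol.eventually_eq_of_sq_eq hb.le (hS I).slSol (hSt I).slSol (fun x hx => ?_)
    fun x hx => hne x (Ioo_subset_Ioc_self hx)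
  exact (hS I).sq_eq_of_cross_mul_eq (hSt I) (hR I) (hRt I) (heq I)
    (hne b (right_mem_Ioc.2 hb))
    (fun t ht => sineSol_cross_mul_eq hb hq hqt hS hSt hR hRt heq heq' (Ioo_subset_Icc_self ht) I)
    hx

/-- classical two-spectra uniqueness on `(0,π)`: if the zeros of
`S(π,·)` (Dirichlet–Dirichlet eigenvalues) and of `S'(π,·)`
(Dirichlet–Neumann eigenvalues) coincide for `q` and `q̃`, then `q = q̃`
almost everywhere on `(0,π)`. -/
theorem statement11
    (q qt : ℝ → ℝ)
    (hq : IntervalIntegrable (fun t => q t) volume 0 Real.pi)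
    (hqt : IntervalIntegrable (fun t => qt t) volume 0 Real.pi)
    (S S' St St' : ℂ → ℝ → ℂ)
    (hS : ∀ lam : ℂ, SLSol (fun t => (q t : ℂ)) lam (S lam) (S' lam)
      (Icc 0 Real.pi) ∧ S lam 0 = 0 ∧ S' lam 0 = 1)
    (hSt : ∀ lam : ℂ, SLSol (fun t => (qt t : ℂ)) lam (St lam) (St' lam)
      (Icc 0 Real.pi) ∧ St lam 0 = 0 ∧ St' lam 0 = 1)
    (hDD : {lam : ℂ | S lam Real.pi = 0} = {lam : ℂ | St lam Real.pi = 0})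
    (hDN : {lam : ℂ | S' lam Real.pi = 0} = {lam : ℂ | St' lam Real.pi = 0}) :
    ∀ᵐ x : ℝ, x ∈ Ioo 0 Real.pi → q x = qt x := by
  filter_upwards [statement11_general Real.pi_pos ⟨hq.1.ofReal, hq.2.ofReal⟩
    ⟨hqt.1.ofReal, hqt.2.ofReal⟩ (fun l => ⟨(hS l).1, (hS l).2.1, (hS l).2.2⟩)
    (fun l => ⟨(hSt l).1, (hSt l).2.1, (hSt l).2.2⟩) hDD.subset hDN.subset] with x hx hmem
  exact ofReal_injective (hx hmem)
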